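/- arXiv:2511.18623 — 3 statements merged into one kernel-verified Lean document; each statement's English description precedes it below -/
import Mathlib

section
/- Splitting formula for the Riesz energy. Let d ≥ 1 and d−2 < s < d (with d = 1 if s = 0), and let V : ℝ^d → ℝ be measurable. Let μ be a compactly supported probability measure on ℝ^d without atoms such that ∬|g(x−y)|dμ(x)dμ(y) < ∞ and ∫|V|dμ < ∞. Set c = ∬ g(x−y)dμ(x)dμ(y) + ∫V dμ and ζ = g∗μ + V − c. Then for every N ≥ 1 and every pairwise distinct X_N = (x_1,…,x_N) ∈ (ℝ^d)^N, H_N(X_N) = N²ℰ(μ) + N∑_{i=1}^N ζ(x_i) + F_N(X_N, μ). Moreover, if h^μ + V equals a constant c′ μ-almost everywhere, then c′ = c; in particular the identity holds for the equilibrium measure μ = μ_V with ζ = ζ_V = h^{μ_V} + V − c_V. -/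
noncomputable section

open MeasureTheory Filter Set Metric
open scoped ENNReal NNReal RealInnerProductSpace Topology

/-- Euclidean space `ℝ^d`. -/
abbrev Ed (d : ℕ) : Type := EuclideanSpace ℝ (Fin d)

/-- Radial profile of the Riesz kernel: `g(r) = r^{-s}/s` for `s ≠ 0`, `-log r` for `s = 0`. -/
def rks (s r : ℝ) : ℝ := if s = 0 then -Real.log r else r ^ (-s) / s

/-- The Riesz kernel `g` on `ℝ^d`. -/
def rk {d : ℕ} (s : ℝ) (x : Ed d) : ℝ := rks s ‖x‖

/-- The gradient of the Riesz kernel: `∇g(z) = -z |z|^{-s-2}`. -/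
def gradRk {d : ℕ} (s : ℝ) (z : Ed d) : Ed d := -(‖z‖ ^ (-(s + 2))) • z

/-- The `N`-point Riesz Hamiltonian with external potential `V`. -/
def HamN {d : ℕ} (s : ℝ) (V : Ed d → ℝ) {N : ℕ} (X : Fin N → Ed d) : ℝ :=
  (1 / 2) * (∑ i, ∑ j ∈ Finset.univ.erase i, rk s (X i - X j)) + N * ∑ i, V (X i)

/-- The partition function `Z_{N,β}`. -/
def ZN (d : ℕ) (s β : ℝ) (V : Ed d → ℝ) (N : ℕ) : ℝ :=
  ∫ X : Fin N → Ed d, Real.exp (-β * (N : ℝ) ^ (-(s / (d : ℝ))) * HamN s V X)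

/-- The Gibbs measure `P_{N,β}` of the Riesz gas. -/
def gibbs (d : ℕ) (s β : ℝ) (V : Ed d → ℝ) (N : ℕ) : Measure (Fin N → Ed d) :=
  volume.withDensity (fun X =>
    ENNReal.ofReal (Real.exp (-β * (N : ℝ) ^ (-(s / (d : ℝ))) * HamN s V X) / ZN d s β V N))

/-- Riesz potential `h^μ = g * μ` generated by a measure. -/
def pot {d : ℕ} (s : ℝ) (μ : Measure (Ed d)) (x : Ed d) : ℝ := ∫ y, rk s (x - y) ∂μ

/-- The mean-field energy functional `ℰ`. -/
def rieszEnergy {d : ℕ} (s : ℝ) (V : Ed d → ℝ) (μ : Measure (Ed d)) : ℝ :=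
  (1 / 2) * ∫ x, pot s μ x ∂μ + ∫ x, V x ∂μ

/-- The effective potential `ζ_V = h^{μ_V} + V - c_V`. -/
def zetaF {d : ℕ} (s : ℝ) (V : Ed d → ℝ) (μ : Measure (Ed d)) (c : ℝ) (x : Ed d) : ℝ :=
  pot s μ x + V x - c

/-- Axis-parallel cube of side `ℓ` centered at `z`. -/
def cube {d : ℕ} (z : Ed d) (ℓ : ℝ) : Set (Ed d) := {x | ∀ i, |x i - z i| ≤ ℓ / 2}

/-- The `ε`-bulk of a set (points of `S` at distance at least `ε` from the boundary). -/
def bulk {d : ℕ} (S : Set (Ed d)) (ε : ℝ) : Set (Ed d) :=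
  {x ∈ S | ε ≤ Metric.infDist x (frontier S)}

/-- Point-count discrepancy of a configuration in a region. -/
def discrep {d : ℕ} (N : ℕ) (X : Fin N → Ed d) (μ : Measure (Ed d)) (B : Set (Ed d)) : ℝ :=
  ({i : Fin N | X i ∈ B}.ncard : ℝ) - N * (μ B).toReal

/-- Integral of a function against the fluctuation `∑ δ_{x_i} - N μ`. -/
def fluctInt {d : ℕ} (N : ℕ) (μ : Measure (Ed d)) (φ : Ed d → ℝ) (X : Fin N → Ed d) : ℝ :=
  (∑ i, φ (X i)) - N * ∫ x, φ x ∂μ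

/-- The next-order energy `F_N(X_N, μ)` (the off-diagonal double integral of `g` against
the fluctuation, expanded bilinearly). -/
def FNenergy {d : ℕ} (s : ℝ) (N : ℕ) (X : Fin N → Ed d) (μ : Measure (Ed d)) : ℝ :=
  (1 / 2) * (∑ i, ∑ j ∈ Finset.univ.erase i, rk s (X i - X j))
    - N * (∑ i, ∫ y in {y | y ≠ X i}, rk s (X i - y) ∂μ)
    + (N : ℝ) ^ 2 / 2 * ∫ x, (∫ y in {y | y ≠ x}, rk s (x - y) ∂μ) ∂μ

/-- The Riesz kernel on the extended space `ℝ^d × ℝ`. -/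
def rkExt {d : ℕ} (s : ℝ) (p : Ed d × ℝ) : ℝ := rks s (Real.sqrt (‖p.1‖ ^ 2 + p.2 ^ 2))

/-- The extended electric potential `h_N[X_N, μ]`. -/
def extPot {d : ℕ} (s : ℝ) (N : ℕ) (X : Fin N → Ed d) (μ : Measure (Ed d))
    (p : Ed d × ℝ) : ℝ :=
  (∑ i, rkExt s (p.1 - X i, p.2)) - N * ∫ x, rkExt s (p.1 - x, p.2) ∂μ

/-- Truncation radii `r_i = (1/4) min(min_{j ≠ i} |x_i - x_j|, N^{-1/d})`. -/
def minr {d : ℕ} (N : ℕ) (X : Fin N → Ed d) (i : Fin N) : ℝ :=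
  (1 / 4) * min (⨅ j ∈ ({i}ᶜ : Set (Fin N)), ‖X i - X j‖) ((N : ℝ) ^ (-(1 : ℝ) / (d : ℝ)))

/-- Truncation profile `f_η = (g - g(η))₊` on the extended space. -/
def truncFn {d : ℕ} (s η : ℝ) (p : Ed d × ℝ) : ℝ := max (rkExt s p - rks s η) 0

/-- The truncated extended electric potential `h_{N, r}`. -/
def extPotTrunc {d : ℕ} (s : ℝ) (N : ℕ) (X : Fin N → Ed d) (μ : Measure (Ed d))
    (p : Ed d × ℝ) : ℝ :=
  extPot s N X μ p - ∑ i, truncFn s (minr N X i) (p.1 - X i, p.2)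

/-- The local electric energy `F̃^{Q}_N(X_N, μ) = ∫_{Q × [-ℓ,ℓ]} |y|^γ |∇ h_{N,r}|²`. -/
def locEnergy {d : ℕ} (s : ℝ) (N : ℕ) (X : Fin N → Ed d) (μ : Measure (Ed d))
    (Q : Set (Ed d)) (ℓ : ℝ) : ℝ :=
  ∫ p in Q ×ˢ Set.Icc (-ℓ) ℓ,
    |p.2| ^ (s - (d : ℝ) + 1) * ‖fderiv ℝ (extPotTrunc s N X μ) p‖ ^ 2

/-- The global extended electric energy `∫_{ℝ^{d+1}} |y|^γ |∇ h_{N,r}|²`. -/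
def globEnergy {d : ℕ} (s : ℝ) (N : ℕ) (X : Fin N → Ed d) (μ : Measure (Ed d)) : ℝ :=
  ∫ p : Ed d × ℝ, |p.2| ^ (s - (d : ℝ) + 1) * ‖fderiv ℝ (extPotTrunc s N X μ) p‖ ^ 2

/-- The Laplacian of a function on `ℝ^d`. -/
def lapl {d : ℕ} (V : Ed d → ℝ) (x : Ed d) : ℝ :=
  ∑ i : Fin d, iteratedFDeriv ℝ 2 V x (fun _ => EuclideanSpace.single i (1 : ℝ))

/-- A set is the graph of a Lipschitz function over a hyperplane. -/
def IsLipschitzGraph {d : ℕ} (S : Set (Ed d)) : Prop :=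
  ∃ (u : Ed d) (K : ℝ≥0) (f : Ed d → ℝ), ‖u‖ = 1 ∧ LipschitzWith K f ∧
    S = {y : Ed d | ∃ x : Ed d, ⟪x, u⟫ = 0 ∧ y = x + f x • u}

/-- Hölder regularity of order `k + ε'` on a set. -/
def HolderSmoothOn {d : ℕ} (k : ℕ) (ε' : ℝ) (f : Ed d → ℝ) (A : Set (Ed d)) : Prop :=
  ContDiffOn ℝ k f A ∧ ∃ C : ℝ, ∀ x ∈ A, ∀ y ∈ A,
    ‖iteratedFDerivWithin ℝ k f A x - iteratedFDerivWithin ℝ k f A y‖ ≤ C * ‖x - y‖ ^ ε'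

/-- `S` is the (closed) support of the measure `μ`. -/
def IsSupportOf {d : ℕ} (μ : Measure (Ed d)) (S : Set (Ed d)) : Prop :=
  IsClosed S ∧ μ Sᶜ = 0 ∧ ∀ F : Set (Ed d), IsClosed F → μ Fᶜ = 0 → S ⊆ F

/-- The equilibrium-measure framework together with assumptions (A1)–(A6) of the paper:
`μV` is the compactly supported equilibrium measure with support `Sg`, `cV` is the
Euler–Lagrange constant, and (A1) nondegeneracy of `ζ_V`, (A2) positive Laplacian,
(A3) Lipschitz free boundary, (A4) regularity of the equilibrium measure,
(A5) regularity and growth of `∇V`, (A6) one-cut regime hold. -/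
structure EqAssumptions (d : ℕ) (s : ℝ) (V : Ed d → ℝ) (k : ℕ)
    (μV : Measure (Ed d)) (Sg : Set (Ed d)) (cV : ℝ) : Prop where
  prob : IsProbabilityMeasure μV
  cpt : IsCompact Sg
  suppEq : IsSupportOf μV Sg
  minimizes : ∀ ν : Measure (Ed d), IsProbabilityMeasure ν →
    (∃ K : Set (Ed d), IsCompact K ∧ ν Kᶜ = 0) → rieszEnergy s V μV ≤ rieszEnergy s V ν
  el_eq : ∀ᵐ x ∂(volume.restrict Sg), pot s μV x + V x = cV
  el_ge : ∀ᵐ x ∂(volume : Measure (Ed d)), cV ≤ pot s μV x + V x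
  a1 : ∃ c > (0 : ℝ), ∃ U : Set (Ed d), IsOpen U ∧ Sg ⊆ U ∧ ∀ x ∈ U,
    c * Metric.infDist x (frontier Sg) ^ (1 + ((d : ℝ) - s) / 2) ≤ zetaF s V μV cV x
  a2 : ∀ x, V x < cV → 0 ≤ lapl V x
  a3 : IsLipschitzGraph (frontier Sg)
  a4 : ∃ ε' ∈ Set.Ioo (0 : ℝ) 1, ∃ sbar : Ed d → ℝ,
    (∃ c > (0 : ℝ), ∀ x ∈ Sg, c ≤ sbar x) ∧ HolderSmoothOn k ε' sbar Sg ∧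
    μV = volume.withDensity (fun x => ENNReal.ofReal
      (Sg.indicator
        (fun y => sbar y * Metric.infDist y (frontier Sg) ^ (1 - ((d : ℝ) - s) / 2)) x))
  a5 : ContDiff ℝ (k + 1) V ∧ ∃ r ≥ (0 : ℝ), ∃ c > (0 : ℝ), ∃ C > (0 : ℝ),
    ∀ x : Ed d, C ≤ ‖x‖ → c * ‖x‖ ^ r ≤ ‖fderiv ℝ V x‖ ∧
      ∀ m : ℕ, 1 ≤ m → m ≤ k → ‖iteratedFDeriv ℝ m V x‖ ≤ C * ‖x‖ ^ (r - m + 1)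
  a6 : IsConnected Sg

/-- The constant `c_{d,α}` of the fractional Laplacian. -/
def cdAlpha (d : ℕ) (α : ℝ) : ℝ :=
  4 ^ α * Real.Gamma ((d : ℝ) / 2 + α) / (Real.pi ^ ((d : ℝ) / 2) * |Real.Gamma (-α)|)

/-- The constant `c_{d,s}`, with `α = (d - s)/2`. -/
def cds (d : ℕ) (s : ℝ) : ℝ :=
  Real.pi ^ ((d : ℝ) / 2) * 4 ^ (((d : ℝ) - s) / 2) * Real.Gamma (((d : ℝ) - s) / 2) /
    Real.Gamma ((d : ℝ) / 2 - ((d : ℝ) - s) / 2)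

/-- Truncated integral appearing in the principal value defining `(-Δ)^α`. -/
def pvInt {d : ℕ} (α : ℝ) (f : Ed d → ℝ) (x : Ed d) (η : ℝ) : ℝ :=
  ∫ y in {y : Ed d | η < ‖y‖}, (f x - f (x + y)) / ‖y‖ ^ ((d : ℝ) + 2 * α)

/-- Convergence of the principal value defining `(-Δ)^α f (x)`. -/
def pvConverges {d : ℕ} (α : ℝ) (f : Ed d → ℝ) (x : Ed d) : Prop :=
  ∃ L : ℝ, Tendsto (pvInt α f x) (nhdsWithin (0 : ℝ) (Set.Ioi 0)) (nhds L)

/-- The fractional Laplacian `(-Δ)^α`, as a principal value. -/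
def fracLap {d : ℕ} (α : ℝ) (f : Ed d → ℝ) (x : Ed d) : ℝ :=
  cdAlpha d α * limUnder (nhdsWithin (0 : ℝ) (Set.Ioi 0)) (pvInt α f x)

/-- Finiteness of the Gagliardo energy of order `α`. -/
def gagliardoFinite {d : ℕ} (α : ℝ) (u : Ed d → ℝ) : Prop :=
  Integrable (fun p : Ed d × Ed d => (u p.1 - u p.2) ^ 2 / ‖p.1 - p.2‖ ^ ((d : ℝ) + 2 * α))

/-- The squared Gagliardo seminorm `[u]_α²`. -/
def gagliardoSq {d : ℕ} (α : ℝ) (u : Ed d → ℝ) : ℝ :=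
  ∫ p : Ed d × Ed d, (u p.1 - u p.2) ^ 2 / ‖p.1 - p.2‖ ^ ((d : ℝ) + 2 * α)

/-- `u` is the `α`-harmonic extension of `φ` relative to `Sg`: it agrees with `φ` a.e.
on `Sg` and minimizes the Gagliardo energy among such functions. -/
def IsAHarmonicExt {d : ℕ} (α : ℝ) (Sg : Set (Ed d)) (φ u : Ed d → ℝ) : Prop :=
  gagliardoFinite α u ∧ (∀ᵐ x ∂(volume.restrict Sg), u x = φ x) ∧
    ∀ v : Ed d → ℝ, gagliardoFinite α v → (∀ᵐ x ∂(volume.restrict Sg), v x = φ x) →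
      gagliardoSq α u ≤ gagliardoSq α v

/-- Bounds `|φ|_{C^σ} ≤ bound σ` on all Hölder seminorms of order `σ ≤ k`. -/
def CNormLe {d : ℕ} (k : ℕ) (φ : Ed d → ℝ) (bound : ℝ → ℝ) : Prop :=
  (∀ m : ℕ, m ≤ k → ∀ x, ‖iteratedFDeriv ℝ m φ x‖ ≤ bound m) ∧
    ∀ m : ℕ, ∀ θ : ℝ, 0 < θ → θ < 1 → (m : ℝ) + θ ≤ (k : ℝ) → ∀ x y, x ≠ y →
      ‖iteratedFDeriv ℝ m φ x - iteratedFDeriv ℝ m φ y‖ ≤ bound ((m : ℝ) + θ) * ‖x - y‖ ^ θ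

/-- The extension-regularity assumption: `dist(·, ∂Σ)^α (-Δ)^α φ^Σ` extends to a
function `w` of class `C^{k+ε'}` on the neighborhood `U` of `Σ`. -/
def ExtRegularity {d : ℕ} (α : ℝ) (Sg U : Set (Ed d)) (k : ℕ) (ε' : ℝ)
    (φS w : Ed d → ℝ) : Prop :=
  HolderSmoothOn k ε' w U ∧
    ∀ x ∈ interior Sg, w x = Metric.infDist x (frontier Sg) ^ α * fracLap α φS x

/-- The transport bounds of order `kk`, with constant `M`, at scale `ℓ` around `z`. -/
def TransportBounds {d : ℕ} (s : ℝ) (kk : ℕ) (M ℓ : ℝ) (z : Ed d)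
    (Sg U : Set (Ed d)) (ψ : Ed d → Ed d) : Prop :=
  ∀ m : ℕ, m ≤ kk → ∀ x : Ed d, x ∉ frontier Sg →
    (x ∈ cube z (2 * ℓ) → ‖iteratedFDeriv ℝ m ψ x‖ ≤ M * ℓ ^ (-((d : ℝ) - s + m - 1))) ∧
    (x ∈ U \ cube z (2 * ℓ) →
      ‖iteratedFDeriv ℝ m ψ x‖ ≤ M * ℓ ^ (d : ℝ) * ‖x - z‖ ^ (-(2 * (d : ℝ) - s + m - 1))) ∧
    (x ∉ U → ‖iteratedFDeriv ℝ m ψ x‖ ≤ M * ℓ ^ (d : ℝ) * ‖x - z‖ ^ (-(s + 2 + m)))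

/-- Entropy of a measure relative to Lebesgue measure. -/
def entM {d : ℕ} (μ : Measure (Ed d)) : ℝ :=
  ∫ x, (μ.rnDeriv volume x).toReal * Real.log (μ.rnDeriv volume x).toReal

/-- Density of a measure with respect to Lebesgue measure. -/
def mudens {d : ℕ} (μ : Measure (Ed d)) (x : Ed d) : ℝ := (μ.rnDeriv volume x).toReal

/-- Pointwise divergence of a vector field on `ℝ^d`. -/
def divg {d : ℕ} (F : Ed d → Ed d) (x : Ed d) : ℝ :=
  ∑ i : Fin d, fderiv ℝ F x (EuclideanSpace.single i (1 : ℝ)) i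

/-! Write `∑ᵢ δ_{xᵢ} = N μ + fluct` and expand the quadratic functional `H_N` around `N μ`. The
terms of degree zero and two in `fluct` are `N² ℰ(μ)` and `F_N`. The linear term is
`N ∫ (h^μ + V) d fluct`, which is `N ∑ᵢ ζ(xᵢ)` because `c` is the value that makes `∫ ζ dμ = 0`.
Removing the diagonal from an integral against `μ` costs nothing, as `μ` has no atoms. -/

section Kernel

variable {E : Type*} [MeasurableSpace E]

/-- The potential `h^μ(x) = ∫ k(x, y) dμ(y)` generated by `μ` through the kernel `k`,
with the value `0` where `k(x, ·)` is not `μ`-integrable. -/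
def kernelPotential (k : E → E → ℝ) (μ : Measure E) (x : E) : ℝ := ∫ y, k x y ∂μ

/-- The Hamiltonian of `N` points with pair interaction `k` in the external potential `V`, in the
mean-field scaling where `V` carries a factor `N`. -/
def pairHamiltonian (k : E → E → ℝ) (V : E → ℝ) {N : ℕ} (X : Fin N → E) : ℝ :=
  (1 / 2) * (∑ i, ∑ j ∈ Finset.univ.erase i, k (X i) (X j)) + N * ∑ i, V (X i)

/-- The mean-field energy `ℰ(μ)` of a continuous distribution with pair interaction `k` in the
external potential `V`. -/
def meanFieldEnergy (k : E → E → ℝ) (V : E → ℝ) (μ : Measure E) : ℝ :=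
  (1 / 2) * ∫ x, kernelPotential k μ x ∂μ + ∫ x, V x ∂μ

/-- The constant `c = ∬ k dμ dμ + ∫ V dμ`, which plays the role of the Euler–Lagrange constant. -/
def effectiveConstant (k : E → E → ℝ) (V : E → ℝ) (μ : Measure E) : ℝ :=
  (∫ x, kernelPotential k μ x ∂μ) + ∫ x, V x ∂μ

/-- The effective potential `ζ = h^μ + V - c`, normalized to have mean zero under a probability
measure `μ`. -/
def effectivePotential (k : E → E → ℝ) (V : E → ℝ) (μ : Measure E) (x : E) : ℝ :=
  kernelPotential k μ x + V x - effectiveConstant k V μ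

/-- The next-order energy `F_N`: for distinct points `xᵢ`, half the off-diagonal double integral of
`k` against `∑ᵢ δ_{xᵢ} - N μ`, expanded bilinearly. The two cross terms, equal for symmetric `k`,
are merged into one. -/
def fluctuationEnergy (k : E → E → ℝ) {N : ℕ} (X : Fin N → E) (μ : Measure E) : ℝ :=
  (1 / 2) * (∑ i, ∑ j ∈ Finset.univ.erase i, k (X i) (X j))
    - N * (∑ i, ∫ y in {y | y ≠ X i}, k (X i) y ∂μ)
    + (N : ℝ) ^ 2 / 2 * ∫ x, (∫ y in {y | y ≠ x}, k x y ∂μ) ∂μ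

theorem setIntegral_ne_eq_integral {F : Type*} [NormedAddCommGroup F] [NormedSpace ℝ F]
    (μ : Measure E) [NullSingletonClass μ] (f : E → F) (x : E) :
    ∫ y in {y | y ≠ x}, f y ∂μ = ∫ y, f y ∂μ := by
  rw [Measure.restrict_eq_self_of_ae_mem (s := {y | y ≠ x}) (μ.ae_ne x)]

theorem fluctuationEnergy_eq_kernelPotential (k : E → E → ℝ) (μ : Measure E)
    [NullSingletonClass μ] {N : ℕ} (X : Fin N → E) :
    fluctuationEnergy k X μ =
      (1 / 2) * (∑ i, ∑ j ∈ Finset.univ.erase i, k (X i) (X j))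
        - N * ∑ i, kernelPotential k μ (X i)
        + (N : ℝ) ^ 2 / 2 * ∫ x, kernelPotential k μ x ∂μ := by
  simp only [fluctuationEnergy, kernelPotential, setIntegral_ne_eq_integral]

theorem sum_effectivePotential (k : E → E → ℝ) (V : E → ℝ) (μ : Measure E)
    {N : ℕ} (X : Fin N → E) :
    ∑ i, effectivePotential k V μ (X i) =
      ∑ i, kernelPotential k μ (X i) + ∑ i, V (X i) - N * effectiveConstant k V μ := by
  simp only [effectivePotential, Finset.sum_sub_distrib, Finset.sum_add_distrib,
    Finset.sum_const, Finset.card_univ, Fintype.card_fin, nsmul_eq_mul]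

theorem pairHamiltonian_eq_splitting (k : E → E → ℝ) (V : E → ℝ) (μ : Measure E)
    [NullSingletonClass μ] {N : ℕ} (X : Fin N → E) :
    pairHamiltonian k V X =
      (N : ℝ) ^ 2 * meanFieldEnergy k V μ + N * ∑ i, effectivePotential k V μ (X i)
        + fluctuationEnergy k X μ := by
  rw [fluctuationEnergy_eq_kernelPotential, sum_effectivePotential, pairHamiltonian,
    meanFieldEnergy, effectiveConstant]
  ring

theorem eq_effectiveConstant_of_ae_eq {k : E → E → ℝ} {V : E → ℝ} {μ : Measure E}
    [IsProbabilityMeasure μ] (hk : Integrable (fun p : E × E => k p.1 p.2) (μ.prod μ))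
    (hV : Integrable V μ) {c : ℝ} (hc : ∀ᵐ x ∂μ, kernelPotential k μ x + V x = c) :
    c = effectiveConstant k V μ :=
  calc c = ∫ x, (kernelPotential k μ x + V x) ∂μ := (integral_eq_const hc).symm
    _ = effectiveConstant k V μ := integral_add hk.integral_prod_left hV

theorem splitting_formula_general (k : E → E → ℝ) (V : E → ℝ) (μ : Measure E)
    [IsProbabilityMeasure μ] [NullSingletonClass μ]
    (hk : Integrable (fun p : E × E => k p.1 p.2) (μ.prod μ)) (hV : Integrable V μ) :
    (∀ (N : ℕ) (X : Fin N → E),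
      pairHamiltonian k V X =
        (N : ℝ) ^ 2 * meanFieldEnergy k V μ + N * ∑ i, effectivePotential k V μ (X i)
          + fluctuationEnergy k X μ) ∧
    ∀ c' : ℝ, (∀ᵐ x ∂μ, kernelPotential k μ x + V x = c') → c' = effectiveConstant k V μ :=
  ⟨fun _ X => pairHamiltonian_eq_splitting k V μ X,
    fun _ hc' => eq_effectiveConstant_of_ae_eq hk hV hc'⟩

end Kernel

/-- **Splitting formula for the Riesz energy** (Lemma 3.1 of the paper). -/
theorem splitting_formula
    {d : ℕ} (hd : 1 ≤ d) {s : ℝ} (hs₁ : (d : ℝ) - 2 < s) (hs₂ : s < d)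
    (hs₀ : s = 0 → d = 1)
    (V : Ed d → ℝ) (hV : Measurable V)
    (μ : Measure (Ed d)) (hprob : IsProbabilityMeasure μ)
    (hcpt : ∃ K : Set (Ed d), IsCompact K ∧ μ Kᶜ = 0)
    (hatom : ∀ x : Ed d, μ {x} = 0)
    (hgint : Integrable (fun p : Ed d × Ed d => rk s (p.1 - p.2)) (μ.prod μ))
    (hVint : Integrable V μ) :
    (∀ N : ℕ, 1 ≤ N → ∀ X : Fin N → Ed d, Function.Injective X →
      HamN s V X = (N : ℝ) ^ 2 * rieszEnergy s V μ +
        N * (∑ i, zetaF s V μ ((∫ x, pot s μ x ∂μ) + ∫ x, V x ∂μ) (X i)) +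
          FNenergy s N X μ) ∧
    ∀ c' : ℝ, (∀ᵐ x ∂μ, pot s μ x + V x = c') →
      c' = (∫ x, pot s μ x ∂μ) + ∫ x, V x ∂μ := by
  have : NullSingletonClass μ := ⟨hatom⟩
  have h := splitting_formula_general (fun x y => rk s (x - y)) V μ hgint hVint
  exact ⟨fun N _ X _ => h.1 N X, h.2⟩

end
end

section
/- Mesoscopic limit of the variance term. Let d ≥ 1 and d−2 < s < d, α = (d−s)/2 ∈ (0,1). Let Σ ⊂ ℝ^d be compact with positive Lebesgue measure, let ε > 0 and z ∈ Σ with dist(z, Σ^c) ≥ ε, and let φ₀ ∈ C¹_c(ℝ^d) be bounded. For 0 < ℓ ≤ 1 set φ_ℓ = φ₀((·−z)/ℓ) and let u_ℓ be a minimizer of the Gagliardo energy [u]_α² among measurable u with [u]_α² < ∞ and u = φ_ℓ a.e. on Σ. Then ℓ^{−s}[u_ℓ]_α² → [φ₀]_α² as ℓ → 0⁺. More precisely, 0 ≤ [φ₀]_α² − ℓ^{−s}[u_ℓ]_α² ≤ C ‖φ₀‖_∞² ℓ^{d−s} for all ℓ small enough (depending on ε and supp φ₀), with C depending only on d, s and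 φ₀. -/
noncomputable section

open MeasureTheory Filter Set Metric
open scoped ENNReal NNReal RealInnerProductSpace Topology

/-!
Let `φ` be supported in a small ball around `z` and let `u` minimize the energy among the functions
equal to `φ` on `Sg ⊇ ball z ε`. Comparing `u` with `φ` itself gives `[u]² ≤ [φ]²`. Conversely, the
energy densities of `u` and `φ` agree on pairs of points of the ball, and that of `φ` vanishes
whenever both points are away from its support, so `[φ]² - [u]²` is at most the contribution of
pairs with one point `y` outside the ball and one point `x` in `closedBall z (ε / 2)`. There the
difference of the densities is `(2 φ(x) u(y) - u(y)²) / |y - x|^(d + 2α)`. The kernel is comparable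
to `|y - z|^(-d - 2α)`, so completing the square in the unknown value `u(y)` bounds this
contribution by a constant times `‖φ‖₁²`, whatever `u` is.

For `φ₀((· - z) / ℓ)` the energy scales as `ℓ^(d - 2α) = ℓ^s` while `‖·‖₁²` scales as `ℓ^(2d)`. The
normalized gap is therefore `O(ℓ^d · ℓ^(d - s))`, and the spare factor `ℓ^d` absorbs every constant.
-/

section RadialKernels

variable {E : Type*} [NormedAddCommGroup E] [NormedSpace ℝ E] [FiniteDimensional ℝ E]
  [MeasurableSpace E] [BorelSpace E] {μ : Measure E} [μ.IsAddHaarMeasure]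

lemma integrableOn_ball_norm_rpow {m : ℝ} (hm : -(Module.finrank ℝ E : ℝ) < m) (R : ℝ) :
    IntegrableOn (fun x : E => ‖x‖ ^ m) (ball 0 R) μ := by
  rcases subsingleton_or_nontrivial E with hE | hE
  · have hconst : (fun x : E => ‖x‖ ^ m) = fun _ => (0 : ℝ) ^ m := by
      funext x
      rw [Subsingleton.elim x 0, norm_zero]
    rw [hconst]
    exact integrableOn_const measure_ball_lt_top.ne
  rcases le_or_gt R 0 with hR | hR
  · simp only [ball_eq_empty.2 hR, integrableOn_empty]
  rw [integrableOn_fun_norm_addHaar μ (f := fun r : ℝ => r ^ m)]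
  have hrpow : IntegrableOn (fun r : ℝ => r ^ ((Module.finrank ℝ E : ℝ) - 1 + m)) (Ioo 0 R) := by
    rw [intervalIntegral.integrableOn_Ioo_rpow_iff hR]
    linarith
  refine hrpow.congr_fun (fun r hr => ?_) measurableSet_Ioo
  rw [smul_eq_mul, ← Real.rpow_natCast, ← Real.rpow_add hr.1,
    Nat.cast_pred (Module.finrank_pos (R := ℝ) (M := E))]

lemma integrableOn_compl_ball_norm_sub_rpow_neg {n : ℝ} (hn : (Module.finrank ℝ E : ℝ) < n)
    (z : E) {r : ℝ} (hr : 0 < r) :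
    IntegrableOn (fun x : E => ‖x - z‖ ^ (-n)) (ball z r)ᶜ μ := by
  have hn₀ : 0 ≤ n := (Nat.cast_nonneg _).trans hn.le
  have hbracket : Integrable (fun x : E => ((1 + r) / r) ^ n * (1 + ‖x - z‖) ^ (-n)) μ :=
    ((integrable_one_add_norm hn).comp_sub_right z).const_mul _
  refine hbracket.integrableOn.mono' (Measurable.aestronglyMeasurable (by fun_prop)) ?_
  filter_upwards [ae_restrict_mem measurableSet_ball.compl] with x hx
  rw [mem_compl_iff, mem_ball, dist_eq_norm, not_lt] at hx
  have hx₀ : 0 < ‖x - z‖ := hr.trans_le hx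
  rw [Real.norm_of_nonneg (by positivity), Real.rpow_neg hx₀.le, Real.rpow_neg (by positivity),
    ← div_eq_mul_inv, ← Real.div_rpow (by positivity) (by positivity),
    ← Real.inv_rpow hx₀.le]
  refine Real.rpow_le_rpow (by positivity) ?_ hn₀
  rw [inv_eq_one_div, div_div, div_le_div_iff₀ hx₀ (by positivity)]
  linarith

lemma integrable_min_sq_div_norm_rpow {n : ℝ} (hn : (Module.finrank ℝ E : ℝ) < n)
    (hn' : n < Module.finrank ℝ E + 2) {a b : ℝ} (ha : 0 ≤ a) (hb : 0 ≤ b) :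
    Integrable (fun x : E => min (a * ‖x‖ ^ 2) b / ‖x‖ ^ n) μ := by
  have hmeas : Measurable fun x : E => min (a * ‖x‖ ^ 2) b / ‖x‖ ^ n := by fun_prop
  have hnonneg (x : E) : 0 ≤ min (a * ‖x‖ ^ 2) b / ‖x‖ ^ n := by positivity
  have hnear : IntegrableOn (fun x : E => min (a * ‖x‖ ^ 2) b / ‖x‖ ^ n) (ball 0 1) μ := by
    have hrpow : IntegrableOn (fun x : E => a * ‖x‖ ^ (2 - n)) (ball 0 1) μ :=
      (integrableOn_ball_norm_rpow (by linarith) 1).const_mul a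
    refine hrpow.mono' hmeas.aestronglyMeasurable (Eventually.of_forall fun x => ?_)
    rw [Real.norm_of_nonneg (hnonneg x)]
    rcases eq_or_ne x 0 with rfl | hx
    · simp only [norm_zero, ne_eq, OfNat.ofNat_ne_zero, not_false_eq_true, zero_pow, mul_zero,
        min_eq_left hb, zero_div]
      positivity
    · rw [Real.rpow_sub (norm_pos_iff.2 hx), Real.rpow_two, ← mul_div_assoc]
      gcongr
      exact min_le_left _ _
  have hfar : IntegrableOn (fun x : E => min (a * ‖x‖ ^ 2) b / ‖x‖ ^ n) (ball 0 1)ᶜ μ := by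
    have hrpow : IntegrableOn (fun x : E => b * ‖x - 0‖ ^ (-n)) (ball 0 1)ᶜ μ :=
      (integrableOn_compl_ball_norm_sub_rpow_neg hn 0 one_pos).const_mul b
    refine hrpow.mono' hmeas.aestronglyMeasurable (Eventually.of_forall fun x => ?_)
    rw [Real.norm_of_nonneg (hnonneg x), sub_zero, Real.rpow_neg (norm_nonneg x),
      ← div_eq_mul_inv]
    gcongr
    exact min_le_right _ _
  rw [← integrableOn_univ, ← union_compl_self (ball (0 : E) 1)]
  exact hnear.union hfar

end RadialKernels

section FarKernel

lemma two_mul_sub_sq_mul_le_sq_div (q a : ℝ) {b : ℝ} (hb : 0 < b) :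
    2 * q * a - q ^ 2 * b ≤ a ^ 2 / b := by
  rw [le_div_iff₀ hb]
  nlinarith only [sq_nonneg (q * b - a)]

variable {E : Type*} [NormedAddCommGroup E] {x y z : E} {ε : ℝ}

lemma half_norm_sub_le_of_mem_closedBall (hx : x ∈ closedBall z (ε / 2)) (hy : ε ≤ ‖y - z‖) :
    ‖y - z‖ / 2 ≤ ‖y - x‖ := by
  rw [mem_closedBall, dist_eq_norm] at hx
  linarith [norm_sub_le_norm_sub_add_norm_sub y x z]

lemma norm_sub_le_of_mem_closedBall (hx : x ∈ closedBall z (ε / 2)) (hy : ε ≤ ‖y - z‖) :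
    ‖y - x‖ ≤ 3 / 2 * ‖y - z‖ := by
  rw [mem_closedBall, dist_eq_norm'] at hx
  linarith [norm_sub_le_norm_sub_add_norm_sub y z x]

lemma two_mul_sub_sq_div_norm_sub_rpow_le {n : ℝ} (hn : 0 ≤ n) (hε : 0 < ε)
    (hx : x ∈ closedBall z (ε / 2)) (hy : ε ≤ ‖y - z‖) (q t : ℝ) :
    (2 * t * q - q ^ 2) / ‖y - x‖ ^ n ≤
      2 * |q| * ((‖y - z‖ / 2) ^ (-n) * |t|) - q ^ 2 * (3 / 2 * ‖y - z‖) ^ (-n) := by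
  have hyz : 0 < ‖y - z‖ := hε.trans_le hy
  have hlower := half_norm_sub_le_of_mem_closedBall hx hy
  have hyx : 0 < ‖y - x‖ := (half_pos hyz).trans_le hlower
  have hkernel_le : ‖y - x‖ ^ (-n) ≤ (‖y - z‖ / 2) ^ (-n) :=
    Real.rpow_le_rpow_of_nonpos (half_pos hyz) hlower (neg_nonpos.2 hn)
  have hle_kernel : (3 / 2 * ‖y - z‖) ^ (-n) ≤ ‖y - x‖ ^ (-n) :=
    Real.rpow_le_rpow_of_nonpos hyx (norm_sub_le_of_mem_closedBall hx hy) (neg_nonpos.2 hn)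
  calc (2 * t * q - q ^ 2) / ‖y - x‖ ^ n
      = 2 * (q * t) * ‖y - x‖ ^ (-n) - q ^ 2 * ‖y - x‖ ^ (-n) := by
        rw [Real.rpow_neg hyx.le]
        ring
    _ ≤ 2 * |q * t| * (‖y - z‖ / 2) ^ (-n) - q ^ 2 * (3 / 2 * ‖y - z‖) ^ (-n) := by
        gcongr
        exact le_abs_self _
    _ = 2 * |q| * ((‖y - z‖ / 2) ^ (-n) * |t|) - q ^ 2 * (3 / 2 * ‖y - z‖) ^ (-n) := by
        rw [abs_mul]
        ring

lemma half_rpow_neg_sq_div_three_halves_rpow_neg {r : ℝ} (hr : 0 < r) (n : ℝ) :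
    ((r / 2) ^ (-n)) ^ 2 / (3 / 2 * r) ^ (-n) = 6 ^ n * r ^ (-n) := by
  rw [← Real.rpow_mul_natCast (by positivity), mul_comm (-n),
    Real.rpow_natCast_mul (by positivity), ← Real.div_rpow (by positivity) (by positivity),
    Real.rpow_neg hr.le, Real.rpow_neg (by positivity),
    ← Real.inv_rpow (by positivity), ← Real.inv_rpow hr.le,
    ← Real.mul_rpow (by positivity) (by positivity)]
  congr 1
  field_simp
  ring

variable [MeasurableSpace E] [BorelSpace E] {μ : Measure E}

lemma integrableOn_closedBall_div_norm_sub_rpow {n : ℝ} (hn : 0 ≤ n) (hε : 0 < ε)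
    (hy : ε ≤ ‖y - z‖) {f : E → ℝ} (hf : IntegrableOn f (closedBall z (ε / 2)) μ) :
    IntegrableOn (fun x => f x / ‖y - x‖ ^ n) (closedBall z (ε / 2)) μ := by
  simp only [div_eq_mul_inv]
  refine hf.mul_bdd (c := (‖y - z‖ / 2) ^ (-n)) (Measurable.aestronglyMeasurable (by fun_prop)) ?_
  filter_upwards [ae_restrict_mem measurableSet_closedBall] with x hx
  rw [Real.norm_of_nonneg (by positivity), ← Real.rpow_neg (norm_nonneg _)]
  exact Real.rpow_le_rpow_of_nonpos (half_pos (hε.trans_le hy))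
    (half_norm_sub_le_of_mem_closedBall hx hy) (neg_nonpos.2 hn)

lemma setIntegral_closedBall_two_mul_sub_sq_div_norm_sub_rpow_le [ProperSpace E]
    [IsFiniteMeasureOnCompacts μ] [μ.IsOpenPosMeasure] {n : ℝ}
    (hn : 0 ≤ n) (hε : 0 < ε) (hy : ε ≤ ‖y - z‖) {φ : E → ℝ} (hφ : Integrable φ μ) (q : ℝ) :
    ∫ x in closedBall z (ε / 2), (2 * φ x * q - q ^ 2) / ‖y - x‖ ^ n ∂μ ≤
      6 ^ n / μ.real (closedBall z (ε / 2)) * (∫ x, |φ x| ∂μ) ^ 2 * ‖y - z‖ ^ (-n) := by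
  have hyz : 0 < ‖y - z‖ := hε.trans_le hy
  set A := closedBall z (ε / 2)
  set c := (‖y - z‖ / 2) ^ (-n)
  set c' := (3 / 2 * ‖y - z‖) ^ (-n)
  have hA : μ A ≠ ∞ := measure_closedBall_lt_top.ne
  have hA₀ : 0 < μ.real A :=
    ENNReal.toReal_pos (measure_closedBall_pos μ z (half_pos hε)).ne' hA
  have hdata : IntegrableOn (fun x => 2 * φ x * q - q ^ 2) A μ :=
    ((hφ.const_mul 2).mul_const q).integrableOn.sub (integrableOn_const hA)
  have hmajor : IntegrableOn (fun x => 2 * |q| * (c * |φ x|)) A μ :=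
    ((hφ.abs.const_mul c).const_mul _).integrableOn
  have hconst : IntegrableOn (fun _ : E => q ^ 2 * c') A μ := integrableOn_const hA
  calc ∫ x in A, (2 * φ x * q - q ^ 2) / ‖y - x‖ ^ n ∂μ
      ≤ ∫ x in A, (2 * |q| * (c * |φ x|) - q ^ 2 * c') ∂μ :=
        setIntegral_mono_on (integrableOn_closedBall_div_norm_sub_rpow hn hε hy hdata)
          (hmajor.sub hconst) measurableSet_closedBall
          fun x hx => two_mul_sub_sq_div_norm_sub_rpow_le hn hε hx hy q (φ x)
    _ = 2 * |q| * (c * ∫ x in A, |φ x| ∂μ) - |q| ^ 2 * (μ.real A * c') := by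
        rw [integral_sub hmajor hconst, integral_const_mul, integral_const_mul, setIntegral_const,
          smul_eq_mul, sq_abs]
        ring
    _ ≤ (c * ∫ x in A, |φ x| ∂μ) ^ 2 / (μ.real A * c') :=
        two_mul_sub_sq_mul_le_sq_div _ _ (by positivity)
    _ ≤ (c * ∫ x, |φ x| ∂μ) ^ 2 / (μ.real A * c') := by
        gcongr
        · exact Eventually.of_forall fun x => abs_nonneg _
        · exact hφ.abs
        · exact Measure.restrict_le_self
    _ = c ^ 2 / c' / μ.real A * (∫ x, |φ x| ∂μ) ^ 2 := by
        field_simp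
    _ = 6 ^ n / μ.real A * (∫ x, |φ x| ∂μ) ^ 2 * ‖y - z‖ ^ (-n) := by
        rw [half_rpow_neg_sq_div_three_halves_rpow_neg hyz]
        ring

end FarKernel

section Rescaling

variable {E F : Type*} [NormedAddCommGroup E] [NormedSpace ℝ E] [FiniteDimensional ℝ E]
  [MeasurableSpace E] [BorelSpace E] {μ : Measure E} [μ.IsAddHaarMeasure]
  [NormedAddCommGroup F] {l : ℝ}

lemma integral_comp_inv_smul_sub [NormedSpace ℝ F] (f : E → F) (z : E) (hl : 0 ≤ l) :
    ∫ x, f (l⁻¹ • (x - z)) ∂μ = l ^ Module.finrank ℝ E • ∫ x, f x ∂μ := by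
  rw [integral_sub_right_eq_self (fun x => f (l⁻¹ • x)) z,
    Measure.integral_comp_inv_smul_of_nonneg μ f hl]

lemma integrable_comp_inv_smul_sub {f : E → F} (hf : Integrable f μ) (z : E) (hl : 0 < l) :
    Integrable (fun x => f (l⁻¹ • (x - z))) μ :=
  (hf.comp_smul (inv_ne_zero hl.ne')).comp_sub_right z

end Rescaling

lemma integral_abs_le_iSup_mul_measureReal_tsupport {X : Type*} [TopologicalSpace X]
    [MeasurableSpace X] {μ : Measure X} [IsFiniteMeasureOnCompacts μ] {f : X → ℝ}
    (hc : HasCompactSupport f) (hb : BddAbove (range fun x => |f x|)) :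
    ∫ x, |f x| ∂μ ≤ (⨆ x, |f x|) * μ.real (tsupport f) := by
  have hsupport : ∀ x ∉ tsupport f, |f x| = 0 := fun x hx =>
    abs_eq_zero.2 (image_eq_zero_of_notMem_tsupport hx)
  rw [← setIntegral_eq_integral_of_forall_compl_eq_zero hsupport]
  refine (Real.le_norm_self _).trans (norm_setIntegral_le_of_norm_le_const
    hc.isCompact.measure_lt_top fun x _ => ?_)
  rw [Real.norm_eq_abs, abs_abs]
  exact le_ciSup hb x

instance {d : ℕ} : (volume : Measure (Ed d × Ed d)).IsAddHaarMeasure :=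
  Measure.prod.instIsAddHaarMeasure _ _

section GagliardoEnergy

variable {d : ℕ} {α : ℝ} {φ u : Ed d → ℝ}

/-- The Gagliardo energy density `(u(x) - u(y))² / |x - y|^(d + 2α)` at the pair `p = (x, y)`. It
takes the value `0` on the diagonal. -/
def gagliardoIntegrand (α : ℝ) (u : Ed d → ℝ) (p : Ed d × Ed d) : ℝ :=
  (u p.1 - u p.2) ^ 2 / ‖p.1 - p.2‖ ^ ((d : ℝ) + 2 * α)

lemma gagliardoFinite_iff_integrable : gagliardoFinite α u ↔ Integrable (gagliardoIntegrand α u) :=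
  Iff.rfl

lemma gagliardoSq_eq_integral (α : ℝ) (u : Ed d → ℝ) :
    gagliardoSq α u = ∫ p, gagliardoIntegrand α u p :=
  rfl

lemma gagliardoIntegrand_nonneg (α : ℝ) (u : Ed d → ℝ) (p : Ed d × Ed d) :
    0 ≤ gagliardoIntegrand α u p := by
  unfold gagliardoIntegrand
  positivity

lemma gagliardoIntegrand_swap (α : ℝ) (u : Ed d → ℝ) (p : Ed d × Ed d) :
    gagliardoIntegrand α u p.swap = gagliardoIntegrand α u p := by
  simp only [gagliardoIntegrand, Prod.fst_swap, Prod.snd_swap, norm_sub_rev p.2,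
    sub_sq_comm (u p.2)]

lemma gagliardoIntegrand_le_of_lipschitzWith {L : ℝ≥0} (hL : LipschitzWith L φ) {M : ℝ}
    (hM : ∀ x, |φ x| ≤ M) (α : ℝ) (p : Ed d × Ed d) :
    gagliardoIntegrand α φ p ≤
      min ((L : ℝ) ^ 2 * ‖p.1 - p.2‖ ^ 2) ((2 * M) ^ 2) / ‖p.1 - p.2‖ ^ ((d : ℝ) + 2 * α) := by
  have hlip : |φ p.1 - φ p.2| ≤ L * ‖p.1 - p.2‖ := by
    rw [← Real.dist_eq, ← dist_eq_norm]
    exact hL.dist_le_mul p.1 p.2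
  have hbdd : |φ p.1 - φ p.2| ≤ 2 * M := by
    linarith [abs_sub (φ p.1) (φ p.2), hM p.1, hM p.2]
  unfold gagliardoIntegrand
  gcongr
  rw [← sq_abs, ← mul_pow]
  exact le_min (by gcongr) (by gcongr)

lemma gagliardoFinite_of_lipschitzWith (hα₀ : 0 < α) (hα₁ : α < 1) {L : ℝ≥0}
    (hL : LipschitzWith L φ) (hc : HasCompactSupport φ) : gagliardoFinite α φ := by
  obtain ⟨M, hM⟩ := hc.exists_bound_of_continuous hL.continuous
  set k : Ed d → ℝ := fun x =>
    min ((L : ℝ) ^ 2 * ‖x‖ ^ 2) ((2 * M) ^ 2) / ‖x‖ ^ ((d : ℝ) + 2 * α) with hk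
  have hk_nonneg (x : Ed d) : 0 ≤ k x := by positivity
  have hk_int : Integrable k := by
    refine integrable_min_sq_div_norm_rpow ?_ ?_ (sq_nonneg _) (sq_nonneg _) <;>
      rw [finrank_euclideanSpace, Fintype.card_fin] <;> linarith
  set χ : Ed d → ℝ := (tsupport φ).indicator fun _ => 1
  have hχ_nonneg (x : Ed d) : 0 ≤ χ x := indicator_nonneg (fun _ _ => zero_le_one) x
  have hχ_int : Integrable χ :=
    (integrableOn_const hc.isCompact.measure_lt_top.ne).integrable_indicator
      (isClosed_tsupport φ).measurableSet
  have hconv : Integrable fun p : Ed d × Ed d => χ p.2 * k (p.1 - p.2) :=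
    hχ_int.convolution_integrand (ContinuousLinearMap.mul ℝ ℝ) hk_int
  refine (hconv.add hconv.swap).mono' ?_ (Eventually.of_forall fun p => ?_)
  · have : Measurable φ := hL.continuous.measurable
    exact Measurable.aestronglyMeasurable (by fun_prop)
  have hle : gagliardoIntegrand α φ p ≤ k (p.1 - p.2) :=
    gagliardoIntegrand_le_of_lipschitzWith hL hM α p
  have hk_swap : k (p.2 - p.1) = k (p.1 - p.2) := by simp only [hk, norm_sub_rev p.2]
  rw [← gagliardoIntegrand, Real.norm_of_nonneg (gagliardoIntegrand_nonneg α φ p)]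
  simp only [Pi.add_apply, Function.comp_apply, Prod.fst_swap, Prod.snd_swap, hk_swap, ← add_mul]
  by_cases hp : p.1 ∈ tsupport φ ∨ p.2 ∈ tsupport φ
  · refine hle.trans (le_mul_of_one_le_left (hk_nonneg _) ?_)
    have hχ_one {x : Ed d} (hx : x ∈ tsupport φ) : χ x = 1 := indicator_of_mem hx _
    rcases hp with h | h
    · linarith [hχ_one h, hχ_nonneg p.2]
    · linarith [hχ_one h, hχ_nonneg p.1]
  · rw [not_or] at hp
    rw [gagliardoIntegrand, image_eq_zero_of_notMem_tsupport hp.1,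
      image_eq_zero_of_notMem_tsupport hp.2, sub_zero, zero_pow two_ne_zero, zero_div]
    exact mul_nonneg (add_nonneg (hχ_nonneg _) (hχ_nonneg _)) (hk_nonneg _)

lemma gagliardoIntegrand_comp_inv_smul_sub (α : ℝ) (φ : Ed d → ℝ) (z : Ed d) {l : ℝ} (hl : 0 < l)
    (p : Ed d × Ed d) :
    gagliardoIntegrand α (fun x => φ (l⁻¹ • (x - z))) p =
      l ^ (-((d : ℝ) + 2 * α)) * gagliardoIntegrand α φ (l⁻¹ • (p - (z, z))) := by
  simp only [gagliardoIntegrand, Prod.smul_fst, Prod.smul_snd, Prod.fst_sub, Prod.snd_sub]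
  rw [← smul_sub, sub_sub_sub_cancel_right, norm_smul, Real.norm_of_nonneg (by positivity),
    Real.mul_rpow (by positivity) (norm_nonneg _), Real.inv_rpow hl.le, Real.rpow_neg hl.le,
    ← mul_div_assoc, mul_div_mul_left _ _ (by positivity)]

lemma gagliardoFinite_comp_inv_smul_sub (hφ : gagliardoFinite α φ) (z : Ed d) {l : ℝ}
    (hl : 0 < l) : gagliardoFinite α (fun x => φ (l⁻¹ • (x - z))) := by
  rw [gagliardoFinite_iff_integrable,
    funext (gagliardoIntegrand_comp_inv_smul_sub α φ z hl)]
  exact (integrable_comp_inv_smul_sub (gagliardoFinite_iff_integrable.1 hφ) (z, z) hl).const_mul _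

lemma gagliardoSq_comp_inv_smul_sub (α : ℝ) (φ : Ed d → ℝ) (z : Ed d) {l : ℝ} (hl : 0 < l) :
    gagliardoSq α (fun x => φ (l⁻¹ • (x - z))) = l ^ ((d : ℝ) - 2 * α) * gagliardoSq α φ := by
  simp only [gagliardoSq_eq_integral, gagliardoIntegrand_comp_inv_smul_sub α φ z hl]
  rw [integral_const_mul, integral_comp_inv_smul_sub _ _ hl.le, smul_eq_mul, ← mul_assoc,
    ← Real.rpow_natCast, ← Real.rpow_add hl, Module.finrank_prod, finrank_euclideanSpace,
    Fintype.card_fin]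
  congr 2
  push_cast
  ring

lemma ae_gagliardoIntegrand_sub_nonpos {A B : Set (Ed d)} (hB : MeasurableSet B) (hAB : A ⊆ B)
    (hφA : Function.support φ ⊆ A) (huφ : ∀ᵐ x ∂volume.restrict B, u x = φ x) (α : ℝ) :
    ∀ᵐ p : Ed d × Ed d, p ∈ (Bᶜ ×ˢ A ∪ A ×ˢ Bᶜ)ᶜ →
      gagliardoIntegrand α φ p - gagliardoIntegrand α u p ≤ 0 := by
  rw [ae_restrict_iff' hB] at huφ
  have hφ₀ {x : Ed d} (hx : x ∉ A) : φ x = 0 :=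
    Function.notMem_support.1 fun h => hx (hφA h)
  filter_upwards [Measure.quasiMeasurePreserving_fst.ae huφ,
    Measure.quasiMeasurePreserving_snd.ae huφ] with p h₁ h₂ hp
  simp only [mem_compl_iff, mem_union, mem_prod, not_or, not_and] at hp
  by_cases hpB : p.1 ∈ B ∧ p.2 ∈ B
  · rw [gagliardoIntegrand, gagliardoIntegrand, h₁ hpB.1, h₂ hpB.2, sub_self]
  · have hpA : p.1 ∉ A ∧ p.2 ∉ A := by
      have h₁AB : p.1 ∈ A → p.1 ∈ B := @hAB p.1
      have h₂AB : p.2 ∈ A → p.2 ∈ B := @hAB p.2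
      tauto
    have hφp : gagliardoIntegrand α φ p = 0 := by
      rw [gagliardoIntegrand, hφ₀ hpA.1, hφ₀ hpA.2, sub_zero, zero_pow two_ne_zero, zero_div]
    linarith [gagliardoIntegrand_nonneg α u p]

lemma gagliardoSq_sub_le_two_mul_setIntegral {A B : Set (Ed d)} (hA : MeasurableSet A)
    (hB : MeasurableSet B) (hAB : A ⊆ B) (hφA : Function.support φ ⊆ A)
    (huφ : ∀ᵐ x ∂volume.restrict B, u x = φ x) (hφ : gagliardoFinite α φ)
    (hu : gagliardoFinite α u) :
    gagliardoSq α φ - gagliardoSq α u ≤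
      2 * ∫ p in Bᶜ ×ˢ A, (gagliardoIntegrand α φ p - gagliardoIntegrand α u p) := by
  set F : Ed d × Ed d → ℝ := fun p => gagliardoIntegrand α φ p - gagliardoIntegrand α u p
  have hF : Integrable F := hφ.sub hu
  have hfar : MeasurableSet (Bᶜ ×ˢ A) := hB.compl.prod hA
  have hfar' : MeasurableSet (A ×ˢ Bᶜ) := hA.prod hB.compl
  have hdisj : Disjoint (Bᶜ ×ˢ A) (A ×ˢ Bᶜ) :=
    disjoint_left.2 fun _ hp hp' => hp.1 (hAB hp'.1)
  have hswap : ∫ p in A ×ˢ Bᶜ, F p = ∫ p in Bᶜ ×ˢ A, F p := by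
    rw [Measure.volume_eq_prod, ← setIntegral_prod_swap]
    simp only [F, gagliardoIntegrand_swap]
  calc gagliardoSq α φ - gagliardoSq α u
      = ∫ p, F p := (integral_sub hφ hu).symm
    _ = (∫ p in Bᶜ ×ˢ A ∪ A ×ˢ Bᶜ, F p) + ∫ p in (Bᶜ ×ˢ A ∪ A ×ˢ Bᶜ)ᶜ, F p :=
        (integral_add_compl (hfar.union hfar') hF).symm
    _ ≤ ∫ p in Bᶜ ×ˢ A ∪ A ×ˢ Bᶜ, F p :=
        add_le_of_nonpos_right <| setIntegral_nonpos_ae (hfar.union hfar').compl <|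
          ae_gagliardoIntegrand_sub_nonpos hB hAB hφA huφ α
    _ = 2 * ∫ p in Bᶜ ×ˢ A, F p := by
        rw [setIntegral_union hdisj hfar' hF.integrableOn hF.integrableOn, hswap, two_mul]

lemma setIntegral_gagliardoIntegrand_sub_eq {A B : Set (Ed d)} (hA : MeasurableSet A)
    (hAB : A ⊆ B) (hφA : Function.support φ ⊆ A) (huφ : ∀ᵐ x ∂volume.restrict B, u x = φ x)
    (α : ℝ) {y : Ed d} (hy : y ∉ B) :
    ∫ x in A, (gagliardoIntegrand α φ (y, x) - gagliardoIntegrand α u (y, x)) =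
      ∫ x in A, (2 * φ x * u y - u y ^ 2) / ‖y - x‖ ^ ((d : ℝ) + 2 * α) := by
  have hφy : φ y = 0 := Function.notMem_support.1 fun h => hy (hAB (hφA h))
  refine setIntegral_congr_ae hA ?_
  filter_upwards [(ae_restrict_iff' hA).1 (ae_restrict_of_ae_restrict_of_subset hAB huφ)]
    with x hx hxA
  simp only [gagliardoIntegrand, hx hxA, hφy]
  ring

/-- The constant in the bound of the energy lost outside `ball z ε` by the square of an `L¹` norm:
`|closedBall z (ε / 2)|⁻¹` comes from completing the square in the exterior value, and
`6 ^ (d + 2α)` from comparing `|y - x|` with `|y - z|` for `x` in that closed ball. -/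
def exteriorEnergyConst (α : ℝ) (z : Ed d) (ε : ℝ) : ℝ :=
  2 * 6 ^ ((d : ℝ) + 2 * α) / volume.real (closedBall z (ε / 2)) *
    ∫ y in (ball z ε)ᶜ, ‖y - z‖ ^ (-((d : ℝ) + 2 * α))

lemma exteriorEnergyConst_nonneg (α : ℝ) (z : Ed d) (ε : ℝ) : 0 ≤ exteriorEnergyConst α z ε :=
  mul_nonneg (by positivity) (integral_nonneg fun y => by positivity)

lemma gagliardoSq_sub_le_exteriorEnergyConst_mul (hα : 0 < α) {z : Ed d} {ε : ℝ} (hε : 0 < ε)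
    (hφ_int : Integrable φ) (hφA : Function.support φ ⊆ closedBall z (ε / 2))
    (huφ : ∀ᵐ x ∂volume.restrict (ball z ε), u x = φ x) (hφ : gagliardoFinite α φ)
    (hu : gagliardoFinite α u) :
    gagliardoSq α φ - gagliardoSq α u ≤ exteriorEnergyConst α z ε * (∫ x, |φ x|) ^ 2 := by
  set A := closedBall z (ε / 2)
  set B := ball z ε
  set n : ℝ := (d : ℝ) + 2 * α
  set K : ℝ := 6 ^ n / volume.real A * (∫ x, |φ x|) ^ 2 with hK
  have hAB : A ⊆ B := closedBall_subset_ball (half_lt_self hε)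
  have hcross : IntegrableOn
      (fun p => gagliardoIntegrand α φ p - gagliardoIntegrand α u p) (Bᶜ ×ˢ A) :=
    (hφ.sub hu).integrableOn
  have houter : IntegrableOn (fun y => ∫ x in A,
      (gagliardoIntegrand α φ (y, x) - gagliardoIntegrand α u (y, x))) Bᶜ := by
    rw [IntegrableOn, Measure.volume_eq_prod, ← Measure.prod_restrict] at hcross
    exact hcross.integral_prod_left
  have hdecay : IntegrableOn (fun y => ‖y - z‖ ^ (-n)) Bᶜ := by
    refine integrableOn_compl_ball_norm_sub_rpow_neg ?_ z hε
    rw [finrank_euclideanSpace, Fintype.card_fin]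
    exact lt_add_of_pos_right _ (by positivity)
  calc gagliardoSq α φ - gagliardoSq α u
      ≤ 2 * ∫ p in Bᶜ ×ˢ A, (gagliardoIntegrand α φ p - gagliardoIntegrand α u p) :=
        gagliardoSq_sub_le_two_mul_setIntegral measurableSet_closedBall measurableSet_ball hAB
          hφA huφ hφ hu
    _ = 2 * ∫ y in Bᶜ, ∫ x in A,
          (gagliardoIntegrand α φ (y, x) - gagliardoIntegrand α u (y, x)) := by
        rw [Measure.volume_eq_prod, setIntegral_prod _ hcross]
    _ ≤ 2 * ∫ y in Bᶜ, K * ‖y - z‖ ^ (-n) := by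
        refine mul_le_mul_of_nonneg_left (setIntegral_mono_on houter
          (hdecay.const_mul K) measurableSet_ball.compl fun y hy => ?_) zero_le_two
        have hyz : ε ≤ ‖y - z‖ := by
          rwa [mem_compl_iff, mem_ball, dist_eq_norm, not_lt] at hy
        rw [setIntegral_gagliardoIntegrand_sub_eq measurableSet_closedBall hAB hφA huφ α hy]
        exact setIntegral_closedBall_two_mul_sub_sq_div_norm_sub_rpow_le (by positivity) hε hyz
          hφ_int (u y)
    _ = exteriorEnergyConst α z ε * (∫ x, |φ x|) ^ 2 := by
        rw [integral_const_mul, exteriorEnergyConst, hK]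
        ring

end GagliardoEnergy

namespace IsAHarmonicExt

variable {d : ℕ} {α : ℝ} {Sg : Set (Ed d)} {φ φ₀ u : Ed d → ℝ} {z : Ed d}

lemma gagliardoSq_le (hu : IsAHarmonicExt α Sg φ u) (hφ : gagliardoFinite α φ) :
    gagliardoSq α u ≤ gagliardoSq α φ :=
  hu.2.2 φ hφ (Eventually.of_forall fun _ => rfl)

lemma gagliardoSq_sub_mem_Icc (hα : 0 < α) {ε : ℝ} (hε : 0 < ε) (hball : ball z ε ⊆ Sg)
    (hφ_int : Integrable φ) (hφA : Function.support φ ⊆ closedBall z (ε / 2))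
    (hφ : gagliardoFinite α φ) (hu : IsAHarmonicExt α Sg φ u) :
    gagliardoSq α φ - gagliardoSq α u ∈
      Icc 0 (exteriorEnergyConst α z ε * (∫ x, |φ x|) ^ 2) :=
  ⟨sub_nonneg.2 (hu.gagliardoSq_le hφ), gagliardoSq_sub_le_exteriorEnergyConst_mul hα hε hφ_int hφA
    (ae_restrict_of_ae_restrict_of_subset hball hu.2.1) hφ hu.1⟩

lemma normalized_gagliardoSq_sub_mem_Icc (hα : 0 < α) {ε : ℝ} (hε : 0 < ε)
    (hball : ball z ε ⊆ Sg) (hφ_int : Integrable φ₀) (hφ : gagliardoFinite α φ₀) {R l : ℝ}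
    (hR : Function.support φ₀ ⊆ closedBall 0 R) (hl : 0 < l) (hlR : l * R ≤ ε / 2)
    (hu : IsAHarmonicExt α Sg (fun x => φ₀ (l⁻¹ • (x - z))) u) :
    gagliardoSq α φ₀ - l ^ (-((d : ℝ) - 2 * α)) * gagliardoSq α u ∈
      Icc 0 (exteriorEnergyConst α z ε * (∫ x, |φ₀ x|) ^ 2 * l ^ d * l ^ (2 * α)) := by
  have hsupp : Function.support (fun x => φ₀ (l⁻¹ • (x - z))) ⊆ closedBall z (ε / 2) := by
    intro x hx
    have hxR : ‖l⁻¹ • (x - z)‖ ≤ R := mem_closedBall_zero_iff.1 (hR hx)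
    rw [norm_smul, Real.norm_of_nonneg (by positivity), inv_mul_le_iff₀ hl] at hxR
    rw [mem_closedBall, dist_eq_norm]
    exact hxR.trans hlR
  have hgap := hu.gagliardoSq_sub_mem_Icc hα hε hball (integrable_comp_inv_smul_sub hφ_int z hl)
    hsupp (gagliardoFinite_comp_inv_smul_sub hφ z hl)
  rw [gagliardoSq_comp_inv_smul_sub α φ₀ z hl,
    integral_comp_inv_smul_sub (fun x => |φ₀ x|) z hl.le, finrank_euclideanSpace,
    Fintype.card_fin, smul_eq_mul] at hgap
  have hl_pos : 0 < l ^ (-((d : ℝ) - 2 * α)) := by positivity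
  have hnormalize : gagliardoSq α φ₀ - l ^ (-((d : ℝ) - 2 * α)) * gagliardoSq α u =
      l ^ (-((d : ℝ) - 2 * α)) * (l ^ ((d : ℝ) - 2 * α) * gagliardoSq α φ₀ - gagliardoSq α u) := by
    rw [mul_sub, ← mul_assoc, ← Real.rpow_add hl, neg_add_cancel, Real.rpow_zero, one_mul]
  have hpow : l ^ (-((d : ℝ) - 2 * α)) * l ^ d = l ^ (2 * α) := by
    rw [← Real.rpow_natCast, ← Real.rpow_add hl]
    ring_nf
  rw [hnormalize]
  refine ⟨mul_nonneg hl_pos.le hgap.1, (mul_le_mul_of_nonneg_left hgap.2 hl_pos.le).trans_eq ?_⟩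
  rw [← hpow]
  ring

lemma eventually_normalized_gagliardoSq_sub_mem_Icc (hd : d ≠ 0) (hα : 0 < α) (hz : Sg ∈ 𝓝 z)
    (hφ_int : Integrable φ₀) (hc : HasCompactSupport φ₀) (hb : BddAbove (range fun x => |φ₀ x|))
    (hφ : gagliardoFinite α φ₀) :
    ∀ᶠ l in 𝓝[>] (0 : ℝ), ∀ u, IsAHarmonicExt α Sg (fun x => φ₀ (l⁻¹ • (x - z))) u →
      gagliardoSq α φ₀ - l ^ (-((d : ℝ) - 2 * α)) * gagliardoSq α u ∈
        Icc 0 ((⨆ x, |φ₀ x|) ^ 2 * l ^ (2 * α)) := by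
  obtain ⟨ε, hε, hball⟩ := Metric.mem_nhds_iff.1 hz
  obtain ⟨R, hR⟩ := hc.isCompact.isBounded.subset_closedBall 0
  set K := exteriorEnergyConst α z ε * volume.real (tsupport φ₀) ^ 2
  have hK : 0 ≤ exteriorEnergyConst α z ε := exteriorEnergyConst_nonneg α z ε
  have hsmall_radius : ∀ᶠ l in 𝓝[>] (0 : ℝ), l * R < ε / 2 := by
    have hlim : Tendsto (fun l : ℝ => l * R) (𝓝 0) (𝓝 0) := by
      simpa only [id_eq, zero_mul] using (tendsto_id (x := 𝓝 (0 : ℝ))).mul_const R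
    exact (hlim.mono_left nhdsWithin_le_nhds).eventually_lt_const (half_pos hε)
  have hsmall_const : ∀ᶠ l in 𝓝[>] (0 : ℝ), K * l ^ d < 1 := by
    have hlim : Tendsto (fun l : ℝ => K * l ^ d) (𝓝 0) (𝓝 0) := by
      simpa only [zero_pow hd, mul_zero] using ((continuous_pow d).tendsto (0 : ℝ)).const_mul K
    exact (hlim.mono_left nhdsWithin_le_nhds).eventually_lt_const one_pos
  filter_upwards [hsmall_radius, hsmall_const, self_mem_nhdsWithin] with l hlR hlK hl u hu
  have hl₀ : 0 < l := hl
  obtain ⟨hnonneg, hle⟩ := hu.normalized_gagliardoSq_sub_mem_Icc hα hε hball hφ_int hφ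
    ((subset_tsupport φ₀).trans hR) hl hlR.le
  refine ⟨hnonneg, hle.trans ?_⟩
  calc exteriorEnergyConst α z ε * (∫ x, |φ₀ x|) ^ 2 * l ^ d * l ^ (2 * α)
      ≤ exteriorEnergyConst α z ε * ((⨆ x, |φ₀ x|) * volume.real (tsupport φ₀)) ^ 2 * l ^ d *
          l ^ (2 * α) := by
        gcongr
        exact integral_abs_le_iSup_mul_measureReal_tsupport hc hb
    _ = K * l ^ d * ((⨆ x, |φ₀ x|) ^ 2 * l ^ (2 * α)) := by ring
    _ ≤ (⨆ x, |φ₀ x|) ^ 2 * l ^ (2 * α) := mul_le_of_le_one_left (by positivity) hlK.le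

end IsAHarmonicExt

theorem mesoscopic_variance_limit_general {d : ℕ} (hd : d ≠ 0) {s : ℝ} (hs : s < d)
    {φ₀ : Ed d → ℝ} (hφ_int : Integrable φ₀) (hc : HasCompactSupport φ₀)
    (hb : BddAbove (range fun x => |φ₀ x|)) (hφ : gagliardoFinite (((d : ℝ) - s) / 2) φ₀)
    {Sg : Set (Ed d)} {z : Ed d} (hz : Sg ∈ 𝓝 z) {u : ℝ → Ed d → ℝ}
    (hu : ∀ ℓ ∈ Ioc (0 : ℝ) 1,
      IsAHarmonicExt (((d : ℝ) - s) / 2) Sg (fun x => φ₀ (ℓ⁻¹ • (x - z))) (u ℓ)) :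
    Tendsto (fun ℓ : ℝ => ℓ ^ (-s) * gagliardoSq (((d : ℝ) - s) / 2) (u ℓ)) (𝓝[>] 0)
      (𝓝 (gagliardoSq (((d : ℝ) - s) / 2) φ₀)) ∧
    ∃ ℓ₀ : ℝ, 0 < ℓ₀ ∧ ℓ₀ ≤ 1 ∧ ∀ ℓ : ℝ, 0 < ℓ → ℓ ≤ ℓ₀ →
      0 ≤ gagliardoSq (((d : ℝ) - s) / 2) φ₀ -
        ℓ ^ (-s) * gagliardoSq (((d : ℝ) - s) / 2) (u ℓ) ∧
      gagliardoSq (((d : ℝ) - s) / 2) φ₀ -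
        ℓ ^ (-s) * gagliardoSq (((d : ℝ) - s) / 2) (u ℓ) ≤
          (⨆ x, |φ₀ x|) ^ 2 * ℓ ^ ((d : ℝ) - s) := by
  have hgap := IsAHarmonicExt.eventually_normalized_gagliardoSq_sub_mem_Icc hd
    (half_pos (sub_pos.2 hs)) hz hφ_int hc hb hφ
  simp only [mul_div_cancel₀ ((d : ℝ) - s) two_ne_zero, sub_sub_cancel] at hgap
  replace hgap : ∀ᶠ ℓ in 𝓝[>] (0 : ℝ), gagliardoSq (((d : ℝ) - s) / 2) φ₀ -
      ℓ ^ (-s) * gagliardoSq (((d : ℝ) - s) / 2) (u ℓ) ∈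
        Icc 0 ((⨆ x, |φ₀ x|) ^ 2 * ℓ ^ ((d : ℝ) - s)) := by
    filter_upwards [hgap, Ioc_mem_nhdsGT one_pos] with ℓ h hℓ using h (u ℓ) (hu ℓ hℓ)
  constructor
  · have hrate : Tendsto (fun ℓ : ℝ => (⨆ x, |φ₀ x|) ^ 2 * ℓ ^ ((d : ℝ) - s)) (𝓝[>] 0) (𝓝 0) := by
      have h := (Real.continuousAt_rpow_const 0 ((d : ℝ) - s) (Or.inr (sub_pos.2 hs).le)).tendsto
      rw [Real.zero_rpow (sub_pos.2 hs).ne'] at h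
      simpa only [mul_zero] using (h.mono_left nhdsWithin_le_nhds).const_mul _
    have hgap₀ := squeeze_zero' (hgap.mono fun _ h => h.1) (hgap.mono fun _ h => h.2) hrate
    simpa only [sub_sub_cancel, sub_zero] using
      hgap₀.const_sub (gagliardoSq (((d : ℝ) - s) / 2) φ₀)
  · obtain ⟨ℓ₁, hℓ₁, hsub⟩ := mem_nhdsGT_iff_exists_Ioc_subset.1 hgap
    exact ⟨min ℓ₁ 1, lt_min hℓ₁ one_pos, min_le_right _ _, fun ℓ hℓ hle =>
      hsub ⟨hℓ, hle.trans (min_le_left _ _)⟩⟩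

/-- **Mesoscopic limit of the variance term**. -/
theorem mesoscopic_variance_limit
    {d : ℕ} (hd : 1 ≤ d) {s : ℝ} (hs₁ : (d : ℝ) - 2 < s) (hs₂ : s < d)
    (φ₀ : Ed d → ℝ) (hφ₀ : ContDiff ℝ 1 φ₀) (hφ₀c : HasCompactSupport φ₀)
    (hφ₀b : ∃ C : ℝ, ∀ x, |φ₀ x| ≤ C) :
    ∃ C > (0 : ℝ), ∀ Sg : Set (Ed d), IsCompact Sg → 0 < volume Sg →
      ∀ (ε : ℝ) (z : Ed d), 0 < ε → z ∈ Sg → ε ≤ Metric.infDist z Sgᶜ →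
      ∀ u : ℝ → Ed d → ℝ,
        (∀ ℓ ∈ Set.Ioc (0 : ℝ) 1,
          IsAHarmonicExt (((d : ℝ) - s) / 2) Sg (fun x => φ₀ (ℓ⁻¹ • (x - z))) (u ℓ)) →
        Tendsto (fun ℓ : ℝ => ℓ ^ (-s) * gagliardoSq (((d : ℝ) - s) / 2) (u ℓ))
          (nhdsWithin (0 : ℝ) (Set.Ioi 0))
          (nhds (gagliardoSq (((d : ℝ) - s) / 2) φ₀)) ∧
        ∃ ℓ₀ : ℝ, 0 < ℓ₀ ∧ ℓ₀ ≤ 1 ∧ ∀ ℓ : ℝ, 0 < ℓ → ℓ ≤ ℓ₀ →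
          0 ≤ gagliardoSq (((d : ℝ) - s) / 2) φ₀ -
              ℓ ^ (-s) * gagliardoSq (((d : ℝ) - s) / 2) (u ℓ) ∧
          gagliardoSq (((d : ℝ) - s) / 2) φ₀ -
              ℓ ^ (-s) * gagliardoSq (((d : ℝ) - s) / 2) (u ℓ) ≤
            C * (⨆ x, |φ₀ x|) ^ 2 * ℓ ^ ((d : ℝ) - s) := by
  have hb : BddAbove (range fun x => |φ₀ x|) := hφ₀b.imp fun _ hC => forall_mem_range.2 hC
  obtain ⟨L, hL⟩ := hφ₀.lipschitzWith_of_hasCompactSupport hφ₀c one_ne_zero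
  have hfin : gagliardoFinite (((d : ℝ) - s) / 2) φ₀ :=
    gagliardoFinite_of_lipschitzWith (by linarith) (by linarith) hL hφ₀c
  refine ⟨1, one_pos, fun Sg _ _ ε z hε _ hεz u hu => ?_⟩
  have hz : Sg ∈ 𝓝 z := mem_of_superset (ball_mem_nhds z hε)
    ((ball_subset_ball hεz).trans ball_infDist_compl_subset)
  simpa only [one_mul] using mesoscopic_variance_limit_general (Nat.one_le_iff_ne_zero.1 hd) hs₂
    (hφ₀.continuous.integrable_of_hasCompactSupport hφ₀c) hφ₀c hb hfin hz hu

end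
end

section
/- Lagrange-interpolation decoupling of exponential moments. Let p ≥ 2 be an integer and let X_1, …, X_p be the p equally spaced points of [1/2, 1], X_i = 1/2 + (i−1)/(2(p−1)). Then there exists a constant C depending only on p such that the following holds. Let (Ω, μ) be a probability space, let γ_1, …, γ_{p−1} be real-valued random variables, let a > 0 and B ≥ 0, and assume that for every i ∈ {1,…,p} and every sign σ ∈ {−1, +1} the integral ∫ exp(σ ∑_{k=1}^{p−1} γ_k (aX_i)^k) dμ is finite with |log ∫ exp(σ ∑_{k=1}^{p−1} γ_k (aX_i)^k) dμ| ≤ B. Then: (i) for every 1 ≤ n ≤ p−1 and every sign σ ∈ {−1,+1}, |log ∫ exp(σ γ_n a^n / C) dμ| ≤ C B; and (ii) for every t ∈ ℝ with |t| ≤ a/C, |log ∫ exp(∑_{k=1}^{p−1} γ_k t^k) dμ| ≤ C (|t|/a) B. -/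
/-!
The Lagrange basis polynomials `ℓᵢ` of `p` distinct nodes `xᵢ` reproduce every polynomial `P` of
degree less than `p`. Hence a coefficient of `P`, and likewise `P(t) - P(0)`, is a linear
combination of the values `P(xᵢ)` whose weights do not depend on `P`: they are the coefficients of
the `ℓᵢ`, respectively `ℓᵢ(t) - ℓᵢ(0) = O(|t|)`. When these weights have absolute sum at most `1`,
Hölder's inequality for the weights bounds the exponential moments of the combination from above by
those of the `± P(xᵢ)`, and `∫ e^L · ∫ e^(-L) ≥ 1` turns upper bounds for `± L` into lower bounds.
The theorem is the case `P(x) = ∑ γₖ (a x)ᵏ`, whose `n`-th coefficient is `γₙ aⁿ` and which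
satisfies `P(0) = 0`.
-/

noncomputable section

open MeasureTheory Filter Set Metric
open scoped ENNReal NNReal RealInnerProductSpace Topology

/-- The `p` equally spaced points of `[1/2, 1]`. -/
def Xnode (p : ℕ) (i : Fin p) : ℝ := 1 / 2 + (i : ℝ) / (2 * ((p : ℝ) - 1))

open scoped Polynomial

section HolderExp

variable {Ω ι : Type*} [MeasurableSpace Ω] {μ : Measure Ω} [IsProbabilityMeasure μ] [Fintype ι]
  {Y : ι → Ω → ℝ} {w : ι → ℝ}

lemma lintegral_exp_sum_mul_le (hY : ∀ i, AEMeasurable (Y i) μ) (hw : ∀ i, 0 ≤ w i)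
    (hw_sum : ∑ i, w i ≤ 1) :
    ∫⁻ ω, ENNReal.ofReal (Real.exp (∑ i, w i * Y i ω)) ∂μ ≤
      ∏ i, (∫⁻ ω, ENNReal.ofReal (Real.exp (Y i ω)) ∂μ) ^ w i := by
  have h_prod (ω : Ω) : ENNReal.ofReal (Real.exp (∑ i, w i * Y i ω)) =
      ∏ i, ENNReal.ofReal (Real.exp (Y i ω)) ^ w i := by
    rw [Real.exp_sum, ENNReal.ofReal_prod_of_nonneg fun i _ ↦ (Real.exp_pos _).le]
    refine Finset.prod_congr rfl fun i _ ↦ ?_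
    rw [ENNReal.ofReal_rpow_of_pos (Real.exp_pos _), ← Real.exp_mul, mul_comm]
  -- The missing weight `1 - ∑ i, w i` goes to the constant function `1`, whose integral is `1`.
  simpa [h_prod] using ENNReal.lintegral_mul_prod_norm_pow_le (μ := μ) Finset.univ
    (g := fun _ ↦ 1) aemeasurable_const (fun i _ ↦ (hY i).exp.ennreal_ofReal)
    (1 - ∑ i, w i) (sub_add_cancel _ _) (sub_nonneg.2 hw_sum) fun i _ ↦ hw i

lemma integrable_exp_sum_mul (hY : ∀ i, Integrable (fun ω ↦ Real.exp (Y i ω)) μ)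
    (hw : ∀ i, 0 ≤ w i) (hw_sum : ∑ i, w i ≤ 1) :
    Integrable (fun ω ↦ Real.exp (∑ i, w i * Y i ω)) μ := by
  have hYm (i : ι) : AEMeasurable (Y i) μ :=
    Real.aemeasurable_of_aemeasurable_exp (hY i).aemeasurable
  have hZm : AEMeasurable (fun ω ↦ ∑ i, w i * Y i ω) μ :=
    Finset.aemeasurable_fun_sum _ fun i _ ↦ (hYm i).const_mul _
  refine (lintegral_ofReal_ne_top_iff_integrable hZm.exp.aestronglyMeasurable
    (.of_forall fun _ ↦ (Real.exp_pos _).le)).1 (ne_top_of_le_ne_top ?_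
      (lintegral_exp_sum_mul_le hYm hw hw_sum))
  exact ENNReal.prod_ne_top fun i _ ↦
    ENNReal.rpow_ne_top_of_nonneg (hw i) (hY i).lintegral_lt_top.ne

lemma integral_exp_sum_mul_le (hY : ∀ i, Integrable (fun ω ↦ Real.exp (Y i ω)) μ)
    (hw : ∀ i, 0 ≤ w i) (hw_sum : ∑ i, w i ≤ 1) :
    ∫ ω, Real.exp (∑ i, w i * Y i ω) ∂μ ≤ ∏ i, (∫ ω, Real.exp (Y i ω) ∂μ) ^ w i := by
  have h := lintegral_exp_sum_mul_le
    (fun i ↦ Real.aemeasurable_of_aemeasurable_exp (hY i).aemeasurable) hw hw_sum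
  have h_prod : ∏ i, ENNReal.ofReal (∫ ω, Real.exp (Y i ω) ∂μ) ^ w i =
      ENNReal.ofReal (∏ i, (∫ ω, Real.exp (Y i ω) ∂μ) ^ w i) := by
    rw [ENNReal.ofReal_prod_of_nonneg fun i _ ↦ by positivity]
    exact Finset.prod_congr rfl fun i _ ↦
      ENNReal.ofReal_rpow_of_pos (integral_exp_pos (hY i))
  simp_rw [← ofReal_integral_eq_lintegral_ofReal (integrable_exp_sum_mul hY hw hw_sum)
    (.of_forall fun _ ↦ (Real.exp_pos _).le), ← ofReal_integral_eq_lintegral_ofReal (hY _)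
    (.of_forall fun _ ↦ (Real.exp_pos _).le), h_prod] at h
  exact (ENNReal.ofReal_le_ofReal_iff (by positivity)).1 h

lemma log_integral_exp_sum_mul_le (hY : ∀ i, Integrable (fun ω ↦ Real.exp (Y i ω)) μ)
    (hw : ∀ i, 0 ≤ w i) (hw_sum : ∑ i, w i ≤ 1) :
    Real.log (∫ ω, Real.exp (∑ i, w i * Y i ω) ∂μ) ≤
      ∑ i, w i * Real.log (∫ ω, Real.exp (Y i ω) ∂μ) := by
  have h_pos (i : ι) : 0 < ∫ ω, Real.exp (Y i ω) ∂μ := integral_exp_pos (hY i)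
  calc Real.log (∫ ω, Real.exp (∑ i, w i * Y i ω) ∂μ)
      ≤ Real.log (∏ i, (∫ ω, Real.exp (Y i ω) ∂μ) ^ w i) :=
        Real.log_le_log (integral_exp_pos (integrable_exp_sum_mul hY hw hw_sum))
          (integral_exp_sum_mul_le hY hw hw_sum)
    _ = ∑ i, w i * Real.log (∫ ω, Real.exp (Y i ω) ∂μ) := by
        rw [Real.log_prod fun i _ ↦ (Real.rpow_pos_of_pos (h_pos i) _).ne']
        exact Finset.sum_congr rfl fun i _ ↦ Real.log_rpow (h_pos i) _

lemma neg_log_integral_exp_neg_le_log_integral_exp {Y : Ω → ℝ}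
    (hY : Integrable (fun ω ↦ Real.exp (Y ω)) μ)
    (hY_neg : Integrable (fun ω ↦ Real.exp (-Y ω)) μ) :
    -Real.log (∫ ω, Real.exp (-Y ω) ∂μ) ≤ Real.log (∫ ω, Real.exp (Y ω) ∂μ) := by
  have h_half := log_integral_exp_sum_mul_le (Y := ![Y, -Y]) (w := fun _ ↦ 1 / 2)
    (Fin.forall_fin_two.2 ⟨hY, hY_neg⟩) (fun _ ↦ by norm_num) (by norm_num)
  simp only [Fin.sum_univ_two, Matrix.cons_val_zero, Matrix.cons_val_one, Pi.neg_apply, mul_neg,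
    add_neg_cancel, Real.exp_zero, integral_const, probReal_univ, one_smul, Real.log_one] at h_half
  linarith

end HolderExp

/-- The random variable `Y` has exponential moments `∫ exp (± Y) ∂μ` which are finite and whose
logarithms lie in `[-B, B]`. Integrability is part of the definition, since the Bochner integral
of a non-integrable function is `0`, and `log 0 = 0`. -/
def HasExpMomentBound {Ω : Type*} [MeasurableSpace Ω] (Y : Ω → ℝ) (B : ℝ) (μ : Measure Ω) : Prop :=
  ∀ σ : ℝ, σ = 1 ∨ σ = -1 →
    Integrable (fun ω ↦ Real.exp (σ * Y ω)) μ ∧ |Real.log (∫ ω, Real.exp (σ * Y ω) ∂μ)| ≤ B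

namespace HasExpMomentBound

variable {Ω ι : Type*} [MeasurableSpace Ω] {μ : Measure Ω} {B B' : ℝ}

lemma nonneg {Y : Ω → ℝ} (h : HasExpMomentBound Y B μ) : 0 ≤ B :=
  (abs_nonneg _).trans (h 1 (.inl rfl)).2

lemma mono {Y : Ω → ℝ} (h : HasExpMomentBound Y B μ) (hB : B ≤ B') : HasExpMomentBound Y B' μ :=
  fun σ hσ ↦ ⟨(h σ hσ).1, (h σ hσ).2.trans hB⟩

lemma neg {Y : Ω → ℝ} (h : HasExpMomentBound Y B μ) :
    HasExpMomentBound (fun ω ↦ -Y ω) B μ := by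
  intro σ hσ
  simpa only [mul_neg, neg_mul] using h (-σ) (by simpa [neg_eq_iff_eq_neg] using hσ.symm)

variable [IsProbabilityMeasure μ]

lemma of_log_le {Y : Ω → ℝ}
    (h : ∀ σ : ℝ, σ = 1 ∨ σ = -1 → Integrable (fun ω ↦ Real.exp (σ * Y ω)) μ ∧
      Real.log (∫ ω, Real.exp (σ * Y ω) ∂μ) ≤ B) :
    HasExpMomentBound Y B μ := by
  intro σ hσ
  obtain ⟨h_int, h_le⟩ := h σ hσ
  obtain ⟨h_int_neg, h_le_neg⟩ := h (-σ) (by simpa [neg_eq_iff_eq_neg] using hσ.symm)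
  simp only [neg_mul] at h_int_neg h_le_neg
  have h_lower := neg_log_integral_exp_neg_le_log_integral_exp h_int h_int_neg
  exact ⟨h_int, abs_le.2 ⟨by linarith, h_le⟩⟩

variable [Fintype ι] {Y : ι → Ω → ℝ} {c : ι → ℝ}

lemma sum_mul_of_nonneg (h : ∀ i, HasExpMomentBound (Y i) B μ) (hc : ∀ i, 0 ≤ c i)
    (hc_sum : ∑ i, c i ≤ 1) :
    HasExpMomentBound (fun ω ↦ ∑ i, c i * Y i ω) ((∑ i, c i) * B) μ := by
  refine of_log_le fun σ hσ ↦ ?_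
  have h_comm (ω : Ω) : σ * ∑ i, c i * Y i ω = ∑ i, c i * (σ * Y i ω) := by
    simp only [Finset.mul_sum, mul_left_comm]
  simp only [h_comm]
  refine ⟨integrable_exp_sum_mul (fun i ↦ (h i σ hσ).1) hc hc_sum,
    (log_integral_exp_sum_mul_le (fun i ↦ (h i σ hσ).1) hc hc_sum).trans ?_⟩
  rw [Finset.sum_mul]
  gcongr with i
  · exact hc i
  · exact (abs_le.1 (h i σ hσ).2).2

lemma sum_mul (h : ∀ i, HasExpMomentBound (Y i) B μ) (hc : ∑ i, |c i| ≤ 1) :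
    HasExpMomentBound (fun ω ↦ ∑ i, c i * Y i ω) ((∑ i, |c i|) * B) μ := by
  let Z (i : ι) (ω : Ω) : ℝ := if 0 ≤ c i then Y i ω else -Y i ω
  have hZ (i : ι) : HasExpMomentBound (Z i) B μ := by
    by_cases hi : 0 ≤ c i
    · simpa [Z, hi] using h i
    · simpa [Z, hi] using (h i).neg
  have hcZ (i : ι) (ω : Ω) : |c i| * Z i ω = c i * Y i ω := by
    by_cases hi : 0 ≤ c i
    · simp [Z, hi, abs_of_nonneg]
    · simp [Z, hi, abs_of_neg (not_le.1 hi)]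
  simpa only [hcZ] using sum_mul_of_nonneg hZ (fun i ↦ abs_nonneg (c i)) hc

end HasExpMomentBound

section CoeffL1Norm

variable {R : Type*} [SeminormedRing R] (q : R[X])

/-- The `ℓ¹` norm of the coefficient sequence of a polynomial. -/
def coeffL1Norm : ℝ := q.sum fun _ a ↦ ‖a‖

lemma norm_coeff_le_coeffL1Norm (n : ℕ) : ‖q.coeff n‖ ≤ coeffL1Norm q := by
  by_cases hn : n ∈ q.support
  · exact Finset.single_le_sum (f := fun k ↦ ‖q.coeff k‖) (fun _ _ ↦ norm_nonneg _) hn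
  · rw [Polynomial.notMem_support_iff.1 hn, norm_zero]
    exact Finset.sum_nonneg fun _ _ ↦ norm_nonneg _

lemma norm_eval_sub_eval_zero_le {t : R} (ht : ‖t‖ ≤ 1) :
    ‖q.eval t - q.eval 0‖ ≤ coeffL1Norm q * ‖t‖ := by
  have h_term (n : ℕ) : ‖q.coeff n * t ^ n - q.coeff n * 0 ^ n‖ ≤ ‖q.coeff n‖ * ‖t‖ := by
    rcases n.eq_zero_or_pos with rfl | hn
    · simpa only [pow_zero, sub_self, norm_zero] using
        mul_nonneg (norm_nonneg (q.coeff 0)) (norm_nonneg t)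
    · rw [zero_pow hn.ne', mul_zero, sub_zero]
      refine (norm_mul_le _ _).trans (mul_le_mul_of_nonneg_left ?_ (norm_nonneg _))
      exact (norm_pow_le' t hn).trans (pow_le_of_le_one (norm_nonneg t) ht hn.ne')
  simp only [Polynomial.eval_eq_sum, coeffL1Norm, Polynomial.sum, ← Finset.sum_sub_distrib,
    Finset.sum_mul]
  exact (norm_sum_le _ _).trans (Finset.sum_le_sum fun n _ ↦ h_term n)

end CoeffL1Norm

section Interpolation

variable {ι K : Type*} [Fintype ι] [DecidableEq ι]

section Field

variable [Field K] {x : ι → K} (hx : Function.Injective x) {q : K[X]}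
  (hq : q.degree < Fintype.card ι)
include hx hq

lemma eq_sum_C_eval_mul_lagrange_basis :
    q = ∑ i, Polynomial.C (q.eval (x i)) * Lagrange.basis Finset.univ x i := by
  simpa using Lagrange.eq_interpolate (s := Finset.univ) hx.injOn hq

lemma coeff_eq_sum_lagrange_basis_coeff_mul_eval (n : ℕ) :
    q.coeff n = ∑ i, (Lagrange.basis Finset.univ x i).coeff n * q.eval (x i) := by
  conv_lhs => rw [eq_sum_C_eval_mul_lagrange_basis hx hq]
  simp [Polynomial.finsetSum_coeff, mul_comm]

lemma eval_eq_sum_lagrange_basis_eval_mul_eval (t : K) :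
    q.eval t = ∑ i, (Lagrange.basis Finset.univ x i).eval t * q.eval (x i) := by
  conv_lhs => rw [eq_sum_C_eval_mul_lagrange_basis hx hq]
  simp [Polynomial.eval_finsetSum, mul_comm]

end Field

variable [NormedField K] (x : ι → K)

/-- The sum of the absolute values of all the coefficients of the Lagrange basis polynomials at
the nodes `x i`: the constant of the decoupling theorem. -/
def lagrangeConst : ℝ := ∑ i, coeffL1Norm (Lagrange.basis Finset.univ x i)

lemma sum_norm_coeff_lagrange_basis_le (n : ℕ) :
    ∑ i, ‖(Lagrange.basis Finset.univ x i).coeff n‖ ≤ lagrangeConst x :=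
  Finset.sum_le_sum fun _ _ ↦ norm_coeff_le_coeffL1Norm _ n

lemma sum_norm_eval_sub_eval_zero_lagrange_basis_le {t : K} (ht : ‖t‖ ≤ 1) :
    ∑ i, ‖(Lagrange.basis Finset.univ x i).eval t - (Lagrange.basis Finset.univ x i).eval 0‖ ≤
      lagrangeConst x * ‖t‖ := by
  rw [lagrangeConst, Finset.sum_mul]
  exact Finset.sum_le_sum fun _ _ ↦ norm_eval_sub_eval_zero_le _ ht

variable {x}

lemma one_le_lagrangeConst [Nonempty ι] (hx : Function.Injective x) : 1 ≤ lagrangeConst x := by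
  have h_sum : ∑ i, (Lagrange.basis Finset.univ x i).coeff 0 = 1 := by
    simpa [Polynomial.finsetSum_coeff] using congr_arg (Polynomial.coeff · 0)
      (Lagrange.sum_basis (s := Finset.univ) hx.injOn Finset.univ_nonempty)
  calc (1 : ℝ) = ‖∑ i, (Lagrange.basis Finset.univ x i).coeff 0‖ := by rw [h_sum, norm_one]
    _ ≤ ∑ i, ‖(Lagrange.basis Finset.univ x i).coeff 0‖ := norm_sum_le _ _
    _ ≤ lagrangeConst x := sum_norm_coeff_lagrange_basis_le x 0

end Interpolation

section RandomPolynomial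

variable {Ω ι : Type*} [MeasurableSpace Ω] {μ : Measure Ω} [IsProbabilityMeasure μ]
  [Fintype ι] [DecidableEq ι] [Nonempty ι] {x : ι → ℝ} {P : Ω → ℝ[X]} {B : ℝ}

lemma hasExpMomentBound_coeff_div_lagrangeConst (hx : Function.Injective x)
    (hP : ∀ ω, (P ω).degree < Fintype.card ι)
    (h : ∀ i, HasExpMomentBound (fun ω ↦ (P ω).eval (x i)) B μ) (n : ℕ) :
    HasExpMomentBound (fun ω ↦ (P ω).coeff n / lagrangeConst x) B μ := by
  have hC : 0 < lagrangeConst x := one_pos.trans_le (one_le_lagrangeConst hx)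
  have h_weights :
      ∑ i, |(Lagrange.basis Finset.univ x i).coeff n / lagrangeConst x| ≤ 1 := by
    simp only [abs_div, abs_of_pos hC, ← Finset.sum_div]
    exact (div_le_one hC).2 (sum_norm_coeff_lagrange_basis_le x n)
  have h_coeff (ω : Ω) : (P ω).coeff n / lagrangeConst x =
      ∑ i, (Lagrange.basis Finset.univ x i).coeff n / lagrangeConst x * (P ω).eval (x i) := by
    simp only [coeff_eq_sum_lagrange_basis_coeff_mul_eval hx (hP ω), Finset.sum_div,
      div_mul_eq_mul_div]
  simp only [h_coeff]
  exact (HasExpMomentBound.sum_mul h h_weights).mono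
    (mul_le_of_le_one_left (h (Classical.arbitrary ι)).nonneg h_weights)

lemma hasExpMomentBound_eval_sub_eval_zero (hx : Function.Injective x)
    (hP : ∀ ω, (P ω).degree < Fintype.card ι)
    (h : ∀ i, HasExpMomentBound (fun ω ↦ (P ω).eval (x i)) B μ) {t : ℝ}
    (ht : |t| ≤ 1 / lagrangeConst x) :
    HasExpMomentBound (fun ω ↦ (P ω).eval t - (P ω).eval 0) (lagrangeConst x * |t| * B) μ := by
  have hC : 1 ≤ lagrangeConst x := one_le_lagrangeConst hx
  have ht_one : |t| ≤ 1 := ht.trans (div_le_one_of_le₀ hC (by positivity))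
  have h_weights := sum_norm_eval_sub_eval_zero_lagrange_basis_le x ht_one
  have h_small : lagrangeConst x * |t| ≤ 1 := (le_div_iff₀' (by positivity)).1 ht
  have h_eval (ω : Ω) : (P ω).eval t - (P ω).eval 0 =
      ∑ i, ((Lagrange.basis Finset.univ x i).eval t - (Lagrange.basis Finset.univ x i).eval 0) *
        (P ω).eval (x i) := by
    rw [eval_eq_sum_lagrange_basis_eval_mul_eval hx (hP ω) t,
      eval_eq_sum_lagrange_basis_eval_mul_eval hx (hP ω) 0]
    simp only [sub_mul, Finset.sum_sub_distrib]
  simp only [h_eval]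
  exact (HasExpMomentBound.sum_mul h (h_weights.trans h_small)).mono
    (mul_le_mul_of_nonneg_right h_weights (h (Classical.arbitrary ι)).nonneg)

theorem lagrange_decoupling_general (hx : Function.Injective x)
    (hP : ∀ ω, (P ω).degree < Fintype.card ι)
    (h : ∀ i, HasExpMomentBound (fun ω ↦ (P ω).eval (x i)) B μ) :
    (∀ n, HasExpMomentBound (fun ω ↦ (P ω).coeff n / lagrangeConst x) B μ) ∧
      ∀ t, |t| ≤ 1 / lagrangeConst x →
        HasExpMomentBound (fun ω ↦ (P ω).eval t - (P ω).eval 0) (lagrangeConst x * |t| * B) μ :=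
  ⟨hasExpMomentBound_coeff_div_lagrangeConst hx hP h,
    fun _ ↦ hasExpMomentBound_eval_sub_eval_zero hx hP h⟩

end RandomPolynomial

section PolyOfCoeffs

variable {R : Type*} [Semiring R] {m : ℕ} (g : Fin m → R)

/-- The polynomial `∑ gₖ Xᵏ`, `1 ≤ k ≤ m`, without constant term; the index `k : Fin m` stands for
the exponent `k + 1`. -/
def polyOfCoeffs : R[X] := ∑ k : Fin m, Polynomial.monomial (k + 1) (g k)

lemma eval_polyOfCoeffs (t : R) :
    (polyOfCoeffs g).eval t = ∑ k : Fin m, g k * t ^ ((k : ℕ) + 1) := by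
  simp [polyOfCoeffs, Polynomial.eval_finsetSum]

lemma coeff_polyOfCoeffs (n : Fin m) : (polyOfCoeffs g).coeff (n + 1) = g n := by
  simp [polyOfCoeffs, Polynomial.finsetSum_coeff, Polynomial.coeff_monomial, Fin.val_inj]

lemma degree_polyOfCoeffs_lt : (polyOfCoeffs g).degree < (m + 1 : ℕ) := by
  refine (Polynomial.degree_sum_le _ _).trans_lt ((Finset.sup_lt_iff (WithBot.bot_lt_coe _)).2 ?_)
  exact fun k _ ↦ (Polynomial.degree_monomial_le _ _).trans_lt
    (Nat.cast_lt.2 (Nat.succ_lt_succ k.2))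

end PolyOfCoeffs

lemma Xnode_injective (p : ℕ) : Function.Injective (Xnode p) := by
  intro i j hij
  by_cases hp : p = 1
  · subst hp
    exact Subsingleton.elim i j
  · have h_ne : 2 * ((p : ℝ) - 1) ≠ 0 :=
      mul_ne_zero two_ne_zero (sub_ne_zero.2 (by exact_mod_cast hp))
    have h_div := add_left_cancel hij
    exact Fin.ext (by exact_mod_cast (div_left_inj' h_ne).1 h_div)

/-- **Lagrange-interpolation decoupling of exponential moments**. -/
theorem lagrange_decoupling (p : ℕ) (hp : 2 ≤ p) :
    ∃ C : ℝ, 0 < C ∧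
      ∀ (Ω : Type) [MeasurableSpace Ω] (μ : Measure Ω), IsProbabilityMeasure μ →
      ∀ (γ : Fin (p - 1) → Ω → ℝ) (a B : ℝ), 0 < a → 0 ≤ B →
      (∀ i : Fin p, ∀ σ : ℝ, σ = 1 ∨ σ = -1 →
        Integrable (fun ω =>
          Real.exp (σ * ∑ k : Fin (p - 1), γ k ω * (a * Xnode p i) ^ ((k : ℕ) + 1))) μ ∧
        |Real.log (∫ ω, Real.exp
            (σ * ∑ k : Fin (p - 1), γ k ω * (a * Xnode p i) ^ ((k : ℕ) + 1)) ∂μ)| ≤ B) →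
      (∀ n : Fin (p - 1), ∀ σ : ℝ, σ = 1 ∨ σ = -1 →
        |Real.log (∫ ω, Real.exp (σ * γ n ω * a ^ ((n : ℕ) + 1) / C) ∂μ)| ≤ C * B) ∧
      (∀ t : ℝ, |t| ≤ a / C →
        |Real.log (∫ ω, Real.exp (∑ k : Fin (p - 1), γ k ω * t ^ ((k : ℕ) + 1)) ∂μ)| ≤
          C * (|t| / a) * B) := by
  have : Nonempty (Fin p) := ⟨⟨0, by omega⟩⟩
  have hx := Xnode_injective p
  have hC : 1 ≤ lagrangeConst (Xnode p) := one_le_lagrangeConst hx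
  refine ⟨lagrangeConst (Xnode p), one_pos.trans_le hC, fun Ω _ μ _ γ a B ha hB h ↦ ?_⟩
  let P (ω : Ω) : ℝ[X] := polyOfCoeffs fun k ↦ γ k ω * a ^ ((k : ℕ) + 1)
  have hP_eval (ω : Ω) (s : ℝ) :
      (P ω).eval s = ∑ k : Fin (p - 1), γ k ω * (a * s) ^ ((k : ℕ) + 1) := by
    simp only [P, eval_polyOfCoeffs, mul_pow, mul_assoc]
  have hP_deg (ω : Ω) : (P ω).degree < Fintype.card (Fin p) := by
    simpa only [Fintype.card_fin, Nat.sub_add_cancel (one_le_two.trans hp)] using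
      degree_polyOfCoeffs_lt fun k ↦ γ k ω * a ^ ((k : ℕ) + 1)
  obtain ⟨h_coeff, h_eval⟩ := lagrange_decoupling_general hx hP_deg (B := B) (μ := μ) fun i ↦ by
    simpa only [hP_eval, HasExpMomentBound] using h i
  constructor
  · intro n σ hσ
    have h_bound := ((h_coeff (n + 1)).mono (le_mul_of_one_le_left hB hC) σ hσ).2
    simpa only [P, coeff_polyOfCoeffs, mul_assoc, mul_div_assoc] using h_bound
  · intro t ht
    have ht' : |t / a| ≤ 1 / lagrangeConst (Xnode p) := by
      rwa [abs_div, abs_of_pos ha, div_le_iff₀ ha, one_div_mul_eq_div]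
    simpa [hP_eval, mul_div_cancel₀ _ ha.ne', abs_div, abs_of_pos ha] using
      (h_eval (t / a) ht' 1 (.inl rfl)).2

end
end
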